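/- For every universal oracle machine U, the totality probability μ(TOT(U)) is a 2-random 0'-right-c.e. real. Conversely, every 2-random 0'-right-c.e. real α ∈ (0,1) equals μ(TOT(U)) for some universal oracle machine U. -/

import Mathlib

open scoped Classical
open MeasureTheory

namespace RandProb

/-- Cantor space: the space of infinite binary sequences. -/
abbrev Cantor := ℕ → Bool

/-! ### Oracle partial recursive functions, via codes -/

/-- Codes for partial recursive functions with access to an oracle `O : ℕ → ℕ`.
These codes play the role of (oracle) Turing machines. -/
inductive CodeO : Type
  | zero : CodeO
  | succ : CodeO
  | left : CodeO
  | right : CodeO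
  | oracle : CodeO
  | pair : CodeO → CodeO → CodeO
  | comp : CodeO → CodeO → CodeO
  | prec : CodeO → CodeO → CodeO
  | rfind' : CodeO → CodeO

/-- Evaluation of an oracle code with (total) oracle `O`. -/
def CodeO.eval (O : ℕ → ℕ) : CodeO → ℕ →. ℕ
  | .zero => pure 0
  | .succ => Nat.succ
  | .left => ↑fun n : ℕ => n.unpair.1
  | .right => ↑fun n : ℕ => n.unpair.2
  | .oracle => ↑fun n : ℕ => O n
  | .pair cf cg => fun n => Nat.pair <$> cf.eval O n <*> cg.eval O n
  | .comp cf cg => fun n => cg.eval O n >>= cf.eval O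
  | .prec cf cg =>
    Nat.unpaired fun a n =>
      n.rec (cf.eval O a) fun y IH => do
        let i ← IH
        cg.eval O (Nat.pair a (Nat.pair y i))
  | .rfind' cf =>
    Nat.unpaired fun a m =>
      (Nat.rfind fun n => (fun m => m = 0) <$> cf.eval O (Nat.pair a (n + m))).map (· + m)

/-- A canonical injective numbering of oracle codes. -/
def CodeO.encode : CodeO → ℕ
  | .zero => 0
  | .succ => 1
  | .left => 2
  | .right => 3
  | .oracle => 4
  | .pair cf cg => 2 * (2 * Nat.pair cf.encode cg.encode) + 5
  | .comp cf cg => 2 * (2 * Nat.pair cf.encode cg.encode + 1) + 5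
  | .prec cf cg => 2 * (2 * Nat.pair cf.encode cg.encode) + 6
  | .rfind' cf => 2 * (2 * cf.encode + 1) + 6

/-- The Turing jump of an oracle: the halting problem relative to `O`,
as a `{0,1}`-valued function. -/
noncomputable def jump (O : ℕ → ℕ) : ℕ → ℕ := fun e =>
  if ∃ c : CodeO, c.encode = e ∧ (c.eval O e).Dom then 1 else 0

/-- `iterJump n` is `∅^(n)`, the `n`-th iterate of the halting problem (as an oracle). -/
noncomputable def iterJump : ℕ → ℕ → ℕ
  | 0 => fun _ => 0
  | n + 1 => jump (iterJump n)

/-- `S ⊆ ℕ` is computably enumerable relative to the oracle `O`. -/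
def CeIn (O : ℕ → ℕ) (S : Set ℕ) : Prop := ∃ c : CodeO, S = {m | (c.eval O m).Dom}

/-- The left Dedekind cut of `α` (as a set of codes of rationals) is c.e. in `O`. -/
def LeftCeIn (O : ℕ → ℕ) (α : ℝ) : Prop :=
  CeIn O {m | ∃ q : ℚ, Encodable.encode q = m ∧ (q : ℝ) < α}

/-- The right Dedekind cut of `α` (as a set of codes of rationals) is c.e. in `O`. -/
def RightCeIn (O : ℕ → ℕ) (α : ℝ) : Prop :=
  CeIn O {m | ∃ q : ℚ, Encodable.encode q = m ∧ α < (q : ℝ)}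

/-! ### Martin-Löf randomness for real numbers -/

/-- The `i`-th component of a Martin-Löf test coded by the set `W ⊆ ℕ`:
the union of all open rational intervals whose codes are enumerated into the
`i`-th section of `W`. -/
def testSet (W : Set ℕ) (i : ℕ) : Set ℝ :=
  {x | ∃ p q : ℚ, Nat.pair i (Encodable.encode (p, q)) ∈ W ∧ (p : ℝ) < x ∧ x < (q : ℝ)}

/-- `α` is Martin-Löf random relative to the oracle `O`. -/
def MLRandomIn (O : ℕ → ℕ) (α : ℝ) : Prop :=
  ∀ W : Set ℕ, CeIn O W →
    (∀ i, volume (testSet W i) ≤ ENNReal.ofReal ((2 : ℝ)⁻¹ ^ i)) →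
    ∃ i, α ∉ testSet W i

/-- `α` is `n`-random: Martin-Löf random relative to `∅^(n-1)`. -/
def NRandom (n : ℕ) (α : ℝ) : Prop := MLRandomIn (iterJump (n - 1)) α

/-! ### The uniform measure on Cantor space -/

/-- The binary digits of a real number (meaningful on `[0,1)`). -/
noncomputable def digits (x : ℝ) : Cantor := fun n => decide (⌊x * 2 ^ (n + 1)⌋ % 2 = 1)

/-- The uniform (Lebesgue) product measure on Cantor space, obtained as the
pushforward of Lebesgue measure on `[0,1)` under the binary-digit map. -/
noncomputable def mu : Measure Cantor :=
  Measure.map digits (volume.restrict (Set.Ico (0 : ℝ) 1))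

/-- The uniform measure of a set of elements of Cantor space, as a real number. -/
noncomputable def muR (S : Set Cantor) : ℝ := (mu S).toReal

/-! ### Strings, prefixes and cylinders -/

/-- The length-`n` initial segment of `X ∈ 2^ω`, as a finite binary string. -/
def initSeg (X : Cantor) (n : ℕ) : List Bool := (List.range n).map X

/-- `⟦S⟧`: the elements of Cantor space having a prefix in the set of strings `S`. -/
def cyl (S : Set (List Bool)) : Set Cantor := {X | ∃ n, initSeg X n ∈ S}

/-- A set of strings is prefix-free if none of its elements properly extends another. -/
def IsPrefixFree (S : Set (List Bool)) : Prop := ∀ σ ∈ S, ∀ τ ∈ S, σ <+: τ → σ = τ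

/-- A set of strings is upward closed if it is closed under taking extensions. -/
def UpClosed (S : Set (List Bool)) : Prop := ∀ σ ∈ S, ∀ τ, σ <+: τ → τ ∈ S

/-- Two strings are compatible if one is a prefix of the other. -/
def Compatible (σ τ : List Bool) : Prop := σ <+: τ ∨ τ <+: σ

/-! ### Oracle machines -/

/-- An element of Cantor space viewed as a `{0,1}`-valued oracle. -/
def oX (X : Cantor) : ℕ → ℕ := fun n => cond (X n) 1 0

/-- `evalO X c n`: the (possibly divergent) output of the oracle machine `c`
on input `n` with oracle `X`. -/
def evalO (X : Cantor) (c : CodeO) (n : ℕ) : Part ℕ := c.eval (oX X) n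

/-- The oracle obtained by writing the string `ρ` before the bits of `X`. -/
def prepend (ρ : List Bool) (X : Cantor) : Cantor := fun n =>
  if n < ρ.length then ρ.getD n false else X (n - ρ.length)

/-- `X ∈ 2^ω` extends the finite string `ρ`. -/
def Extends (X : Cantor) (ρ : List Bool) : Prop := initSeg X ρ.length = ρ

/-- `u` is a universal oracle machine: some effective, prefix-free translation
`c ↦ σ_c` satisfies `u(σ_c * X, n) ≃ c(X, n)` for all machines `c`. -/
def UniversalOM (u : CodeO) : Prop :=
  ∃ σ : CodeO → List Bool,
    (∃ f : ℕ → ℕ, Computable f ∧ ∀ c : CodeO, f c.encode = Encodable.encode (σ c)) ∧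
    IsPrefixFree (Set.range σ) ∧
    ∀ (c : CodeO) (X : Cantor) (n : ℕ), evalO (prepend (σ c) X) u n = evalO X c n

/-- `TOT(c)`: the oracles `X` such that the function `c(X)` is total. -/
def TOT (c : CodeO) : Set Cantor := {X | ∀ n, (evalO X c n).Dom}

/-- The domain of the partial function `c(X)`. -/
def domSet (c : CodeO) (X : Cantor) : Set ℕ := {n | (evalO X c n).Dom}

/-- The range of the partial function `c(X)`. -/
def ranSet (c : CodeO) (X : Cantor) : Set ℕ := {v | ∃ n, v ∈ evalO X c n}

/-- `INF(c)`: the oracles `X` such that `c(X)` has infinite domain. -/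
def INF (c : CodeO) : Set Cantor := {X | (domSet c X).Infinite}

/-- `COF(c)`: the oracles `X` such that `c(X)` has cofinite domain. -/
def COF (c : CodeO) : Set Cantor := {X | (domSet c X)ᶜ.Finite}

/-- `COM(c)`: the oracles `X` such that `c(X)` has computable domain. -/
def COM (c : CodeO) : Set Cantor := {X | ComputablePred fun n => n ∈ domSet c X}

/-- The characteristic function of a set of naturals. -/
noncomputable def chi (A : Set ℕ) : ℕ → ℕ := fun n => if n ∈ A then 1 else 0

/-- Turing reducibility between sets of naturals. -/
def TuringLEs (B A : Set ℕ) : Prop := ∃ c : CodeO, ∀ n, c.eval (chi A) n = Part.some (chi B n)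

/-- The halting problem `∅'` as a set of naturals. -/
noncomputable def HaltingSet : Set ℕ := {e | iterJump 1 e = 1}

/-- `COMPL(c)`: the oracles `X` such that the domain of `c(X)` computes the halting problem. -/
noncomputable def COMPL (c : CodeO) : Set Cantor := {X | TuringLEs HaltingSet (domSet c X)}

/-- Turing reducibility between total functions on ℕ. -/
def TuringLEf (f g : ℕ → ℕ) : Prop := ∃ c : CodeO, ∀ n, c.eval g n = Part.some (f n)

/-- A real number viewed as an oracle, via its binary expansion. -/
noncomputable def realOracle (α : ℝ) : ℕ → ℕ := oX (digits α)

/-- Two reals have Turing-incomparable degrees. -/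
noncomputable def TIncompReal (α β : ℝ) : Prop :=
  ¬ TuringLEf (realOracle α) (realOracle β) ∧ ¬ TuringLEf (realOracle β) (realOracle α)

/-! ### Arithmetical hierarchy -/

/-- Evaluation with the trivial (empty) oracle: ordinary partial recursion. -/
def eval0 (c : CodeO) : ℕ →. ℕ := c.eval fun _ => 0

/-- `SigmaNumIdx n c` is the `Σ^0_{n+1}` subset of `ℕ` with index `c`. -/
def SigmaNumIdx : ℕ → CodeO → Set ℕ
  | 0, c => {m | (eval0 c m).Dom}
  | n + 1, c => {m | ∃ k, Nat.pair m k ∉ SigmaNumIdx n c}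

/-- `S ⊆ ℕ` is `Σ^0_n` (intended for `n ≥ 1`). -/
def SigmaN (n : ℕ) (S : Set ℕ) : Prop := ∃ c : CodeO, S = SigmaNumIdx (n - 1) c

/-- The set of codes of the elements of a set of binary strings. -/
def strCodes (S : Set (List Bool)) : Set ℕ := {m | ∃ σ ∈ S, Encodable.encode σ = m}

/-- A set of binary strings is `Σ^0_n`. -/
def SigmaStr (n : ℕ) (S : Set (List Bool)) : Prop := SigmaN n (strCodes S)

/-- A set of binary strings is `Π^0_n`: its complement is `Σ^0_n`. -/
def PiStr (n : ℕ) (S : Set (List Bool)) : Prop := SigmaStr n Sᶜ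

/-- A set of binary strings is c.e. relative to the oracle `O`. -/
def CeStrIn (O : ℕ → ℕ) (S : Set (List Bool)) : Prop := CeIn O (strCodes S)

/-- `SigmaClassIdx n c m` is the `Σ^0_{n+1}` class of elements of Cantor space
with index `c` and parameter `m`. -/
def SigmaClassIdx : ℕ → CodeO → ℕ → Set Cantor
  | 0, c, m => {X | (evalO X c m).Dom}
  | n + 1, c, m => {X | ∃ k, X ∉ SigmaClassIdx n c (Nat.pair m k)}

/-! ### Monotone machines -/

/-- A monotone machine: a partial computable, monotone map on finite binary strings. -/
structure MonoMachine where
  f : List Bool →. List Bool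
  partrec : Partrec f
  mono : ∀ ⦃σ τ a b : List Bool⦄, σ <+: τ → a ∈ f σ → b ∈ f τ → a <+: b

/-- The oracles `X` such that the output of the monotone machine on `X` is infinite. -/
def MonoINF (M : MonoMachine) : Set Cantor :=
  {X | ∀ k, ∃ n a, a ∈ M.f (initSeg X n) ∧ k ≤ a.length}

/-- The `k`-th bit of the output `M(X)` of a monotone machine is `b`. -/
def MonoMachine.hasBit (M : MonoMachine) (X : Cantor) (k : ℕ) (b : Bool) : Prop :=
  ∃ n a, a ∈ M.f (initSeg X n) ∧ a[k]? = some b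

/-- `U` is a universal monotone machine. -/
def UniversalMono (U : MonoMachine) : Prop :=
  ∃ (M : ℕ → MonoMachine) (σ : ℕ → List Bool),
    Partrec₂ (fun (e : ℕ) (τ : List Bool) => (M e).f τ) ∧
    (∀ V : MonoMachine, ∃ e, (M e).f = V.f) ∧
    Computable σ ∧ IsPrefixFree (Set.range σ) ∧
    ∀ e τ, U.f (σ e ++ τ) = (M e).f τ

/-! ### Infinitary self-delimiting machines -/

/-- Chaitin's infinitary self-delimiting machines: `f σ n` is the `n`-th approximation
of the output on program `σ` (`none` meaning divergence); the convergence relation is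
decidable, approximations are monotone, and machines are self-delimiting. -/
structure InfMachine where
  f : List Bool → ℕ → Option (List Bool)
  computable : Computable₂ f
  mono : ∀ σ m n a, n < m → f σ m = some a → ∃ b, f σ n = some b ∧ b <+: a
  sd : ∀ σ τ n a, f σ n = some a → f (σ ++ τ) n = some a

/-- `M^∞(σ)↓`: all approximations converge. -/
def InfMachine.domInf (M : InfMachine) (σ : List Bool) : Prop := ∀ n, M.f σ n ≠ none

/-- The domain of `M^∞`. -/
def InfMachine.DOM (M : InfMachine) : Set (List Bool) := {σ | M.domInf σ}

/-- The output `M^∞(σ)` is infinite (a stream). -/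
def InfMachine.outInf (M : InfMachine) (σ : List Bool) : Prop :=
  ∀ k, ∃ n a, M.f σ n = some a ∧ k ≤ a.length

/-- `FIN(M^∞)`: programs in the domain with finite output. -/
def InfMachine.FIN (M : InfMachine) : Set (List Bool) := {σ | M.domInf σ ∧ ¬ M.outInf σ}

/-- `INF(M^∞)`: programs in the domain with infinite output. -/
def InfMachine.INF (M : InfMachine) : Set (List Bool) := {σ | M.domInf σ ∧ M.outInf σ}

/-- The `k`-th bit of the output `M^∞(σ)` is `b`. -/
def InfMachine.hasBit (M : InfMachine) (σ : List Bool) (k : ℕ) (b : Bool) : Prop :=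
  ∃ n a, M.f σ n = some a ∧ a[k]? = some b

/-- The domain of the prefix-free machine `M^*`: minimal strings in the domain of `M^∞`. -/
def InfMachine.DOMstar (M : InfMachine) : Set (List Bool) :=
  {σ | M.domInf σ ∧ ∀ τ, τ <+: σ → τ ≠ σ → ¬ M.domInf τ}

/-- Programs whose output is a stream with a tail of 1s. -/
def InfMachine.COFout (M : InfMachine) : Set (List Bool) :=
  {σ | M.domInf σ ∧ M.outInf σ ∧ ∃ t, ∀ k, t ≤ k → M.hasBit σ k true}

/-- `A^∞(σ) ≃ B^∞(τ)`: both converge or both diverge, with equal outputs. -/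
def InfAgree (A : InfMachine) (σ : List Bool) (B : InfMachine) (τ : List Bool) : Prop :=
  (A.domInf σ ↔ B.domInf τ) ∧ (A.domInf σ → ∀ k b, (A.hasBit σ k b ↔ B.hasBit τ k b))

/-- `U` is a universal infinitary self-delimiting machine. -/
def UniversalInf (U : InfMachine) : Prop :=
  ∃ (M : ℕ → InfMachine) (σ : ℕ → List Bool),
    Computable (fun p : ℕ × List Bool × ℕ => (M p.1).f p.2.1 p.2.2) ∧
    (∀ V : InfMachine, ∃ e, ∀ τ, InfAgree (M e) τ V τ) ∧
    Computable σ ∧ IsPrefixFree (Set.range σ) ∧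
    ∀ e τ, InfAgree U (σ e ++ τ) (M e) τ

end RandProb


namespace RandProb

/-! ### Toolbox for `Computable` -/

attribute [fun_prop] Computable
attribute [fun_prop] Computable.id Computable.const Computable.comp

section Toolbox
variable {α β γ δ : Type*} [Primcodable α] [Primcodable β] [Primcodable γ] [Primcodable δ]

@[fun_prop] theorem cp_fst {f : α → β × γ} (h : Computable f) : Computable fun x => (f x).1 :=
  Computable.fst.comp h
@[fun_prop] theorem cp_snd {f : α → β × γ} (h : Computable f) : Computable fun x => (f x).2 :=
  Computable.snd.comp h
@[fun_prop] theorem cp_mk {f : α → β} {g : α → γ} (h : Computable f) (h2 : Computable g) :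
    Computable fun x => (f x, g x) := h.pair h2
@[fun_prop] theorem cp_nat_add {f g : α → ℕ} (h : Computable f) (h2 : Computable g) :
    Computable fun x => f x + g x := (Primrec.nat_add.to_comp).comp h h2
@[fun_prop] theorem cp_nat_mul {f g : α → ℕ} (h : Computable f) (h2 : Computable g) :
    Computable fun x => f x * g x := (Primrec.nat_mul.to_comp).comp h h2
@[fun_prop] theorem cp_nat_sub {f g : α → ℕ} (h : Computable f) (h2 : Computable g) :
    Computable fun x => f x - g x := (Primrec.nat_sub.to_comp).comp h h2
@[fun_prop] theorem cp_nat_div {f g : α → ℕ} (h : Computable f) (h2 : Computable g) :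
    Computable fun x => f x / g x := (Primrec.nat_div.to_comp).comp h h2
@[fun_prop] theorem cp_nat_mod {f g : α → ℕ} (h : Computable f) (h2 : Computable g) :
    Computable fun x => f x % g x := (Primrec.nat_mod.to_comp).comp h h2
@[fun_prop] theorem cp_pair {f g : α → ℕ} (h : Computable f) (h2 : Computable g) :
    Computable fun x => Nat.pair (f x) (g x) := (Primrec₂.natPair.to_comp).comp h h2
@[fun_prop] theorem cp_unpair {f : α → ℕ} (h : Computable f) :
    Computable fun x => Nat.unpair (f x) := Computable.unpair.comp h
@[fun_prop] theorem cp_succ {f : α → ℕ} (h : Computable f) :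
    Computable fun x => Nat.succ (f x) := Computable.succ.comp h
@[fun_prop] theorem cp_encode {f : α → β} (h : Computable f) :
    Computable fun x => Encodable.encode (f x) := Computable.encode.comp h
@[fun_prop] theorem cp_decode {f : α → ℕ} (h : Computable f) :
    Computable fun x => (Encodable.decode (f x) : Option β) := Computable.decode.comp h
@[fun_prop] theorem cp_cond {c : α → Bool} {f g : α → β} (hc : Computable c) (h : Computable f)
    (h2 : Computable g) : Computable fun x => bif c x then f x else g x :=
  Computable.cond hc h h2
@[fun_prop] theorem cp_nat_rec {n : α → ℕ} {f : α → β} {g : α → ℕ → β → β} (hc : Computable n)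
    (h : Computable f) (h2 : Computable fun p : α × ℕ × β => g p.1 p.2.1 p.2.2) :
    Computable fun x => Nat.rec (motive := fun _ => β) (f x) (g x) (n x) :=
  Computable.nat_rec (h := fun a p => g a p.1 p.2) hc h h2
@[fun_prop] theorem cp_some {f : α → β} (h : Computable f) :
    Computable fun x => some (f x) := Computable.option_some.comp h
@[fun_prop] theorem cp_getD {f : α → Option β} {g : α → β} (h : Computable f)
    (h2 : Computable g) : Computable fun x => (f x).getD (g x) := Computable.option_getD h h2
@[fun_prop] theorem cp_isSome {f : α → Option β} (h : Computable f) :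
    Computable fun x => (f x).isSome := (Primrec.option_isSome.to_comp).comp h
@[fun_prop] theorem cp_bind {f : α → Option β} {g : α → β → Option γ} (h : Computable f)
    (h2 : Computable fun p : α × β => g p.1 p.2) : Computable fun x => (f x).bind (g x) :=
  Computable.option_bind h h2
@[fun_prop] theorem cp_map {f : α → Option β} {g : α → β → γ} (h : Computable f)
    (h2 : Computable fun p : α × β => g p.1 p.2) : Computable fun x => (f x).map (g x) :=
  Computable.option_map h h2
@[fun_prop] theorem cp_elim {f : α → Option β} {g : α → γ} {k : α → β → γ} (h : Computable f)
    (h1 : Computable g)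
    (h2 : Computable fun p : α × β => k p.1 p.2) : Computable fun x => (f x).elim (g x) (k x) :=
  (Computable.option_casesOn h h1 h2).of_eq fun x => by cases f x <;> rfl
@[fun_prop] theorem cp_and {f g : α → Bool} (h : Computable f) (h2 : Computable g) :
    Computable fun x => f x && g x := (Primrec.and.to_comp).comp h h2
@[fun_prop] theorem cp_or {f g : α → Bool} (h : Computable f) (h2 : Computable g) :
    Computable fun x => f x || g x := (Primrec.or.to_comp).comp h h2
@[fun_prop] theorem cp_not {f : α → Bool} (h : Computable f) :
    Computable fun x => !(f x) := (Primrec.not.to_comp).comp h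
@[fun_prop] theorem cp_nat_le {f g : α → ℕ} (h : Computable f) (h2 : Computable g) :
    Computable fun x => decide (f x ≤ g x) :=
  (Primrec.nat_le.decide.to_comp).comp h h2
@[fun_prop] theorem cp_nat_lt {f g : α → ℕ} (h : Computable f) (h2 : Computable g) :
    Computable fun x => decide (f x < g x) :=
  (Primrec.nat_lt.decide.to_comp).comp h h2
@[fun_prop] theorem cp_eq [DecidableEq β] {f g : α → β} (h : Computable f) (h2 : Computable g) :
    Computable fun x => decide (f x = g x) :=
  ((Primrec.eq (α := β)).decide.to_comp).comp h h2
@[fun_prop] theorem cp_length {f : α → List β} (h : Computable f) :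
    Computable fun x => (f x).length := Computable.list_length.comp h
@[fun_prop] theorem cp_append {f g : α → List β} (h : Computable f) (h2 : Computable g) :
    Computable fun x => f x ++ g x := Computable.list_append.comp h h2
@[fun_prop] theorem cp_cons {f : α → β} {g : α → List β} (h : Computable f) (h2 : Computable g) :
    Computable fun x => f x :: g x := Computable.list_cons.comp h h2
@[fun_prop] theorem cp_take {n : α → ℕ} {f : α → List β} (h : Computable n) (h2 : Computable f) :
    Computable fun x => (f x).take (n x) := (Primrec.list_take.to_comp).comp h h2
@[fun_prop] theorem cp_drop {n : α → ℕ} {f : α → List β} (h : Computable n) (h2 : Computable f) :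
    Computable fun x => (f x).drop (n x) := (Primrec.list_drop.to_comp).comp h h2
@[fun_prop] theorem cp_getElem? {n : α → ℕ} {f : α → List β} (h : Computable n)
    (h2 : Computable f) :
    Computable fun x => (f x)[n x]? := Computable.list_getElem?.comp h2 h
@[fun_prop] theorem cp_range {n : α → ℕ} (h : Computable n) :
    Computable fun x => List.range (n x) := (Primrec.list_range.to_comp).comp h
@[fun_prop] theorem cp_pow {f g : α → ℕ} (h : Computable f) (h2 : Computable g) :
    Computable fun x => f x ^ g x := by
  have : Computable fun x => Nat.rec (motive := fun _ => ℕ) 1 (fun _ r => r * f x) (g x) := by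
    fun_prop
  refine this.of_eq fun x => ?_
  induction g x with
  | zero => rfl
  | succ n ih => rw [pow_succ, ← ih]
@[fun_prop] theorem cp_replicate {n : α → ℕ} {f : α → β} (h : Computable n) (h2 : Computable f) :
    Computable fun x => List.replicate (n x) (f x) := by
  have : Computable fun x => Nat.rec (motive := fun _ => List β) [] (fun _ r => f x :: r) (n x) := by
    fun_prop
  refine this.of_eq fun x => ?_
  induction n x with
  | zero => rfl
  | succ n ih => rw [List.replicate_succ, ← ih]

/-- Bounded existential quantifier as a Boolean function. -/
def bEx (n : ℕ) (p : ℕ → Bool) : Bool := Nat.rec (motive := fun _ => Bool) false (fun k r => r || p k) n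

theorem bEx_iff {n : ℕ} {p : ℕ → Bool} : bEx n p = true ↔ ∃ k < n, p k = true := by
  induction n with
  | zero => simp [bEx]
  | succ n ih =>
    have : bEx (n+1) p = (bEx n p || p n) := rfl
    rw [this, Bool.or_eq_true, ih]
    constructor
    · rintro (⟨k, hk, h⟩ | h)
      · exact ⟨k, by omega, h⟩
      · exact ⟨n, by omega, h⟩
    · rintro ⟨k, hk, h⟩
      rcases Nat.lt_succ_iff_lt_or_eq.1 hk with h1 | rfl
      · exact Or.inl ⟨k, h1, h⟩
      · exact Or.inr h

@[fun_prop] theorem cp_bEx {n : α → ℕ} {p : α → ℕ → Bool} (h : Computable n)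
    (h2 : Computable fun x : α × ℕ => p x.1 x.2) : Computable fun x => bEx (n x) (p x) := by
  unfold bEx
  fun_prop

/-- Bounded universal quantifier as a Boolean function. -/
def bAll (n : ℕ) (p : ℕ → Bool) : Bool := !(bEx n fun k => !(p k))

theorem bAll_iff {n : ℕ} {p : ℕ → Bool} : bAll n p = true ↔ ∀ k < n, p k = true := by
  unfold bAll
  rw [Bool.not_eq_true', ← Bool.not_eq_true, bEx_iff]
  push Not
  simp

@[fun_prop] theorem cp_bAll {n : α → ℕ} {p : α → ℕ → Bool} (h : Computable n)
    (h2 : Computable fun x : α × ℕ => p x.1 x.2) : Computable fun x => bAll (n x) (p x) := by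
  unfold bAll
  fun_prop

/-- Bounded sum. -/
def bSum (n : ℕ) (p : ℕ → ℕ) : ℕ := Nat.rec (motive := fun _ => ℕ) 0 (fun k r => r + p k) n

theorem bSum_eq (n : ℕ) (p : ℕ → ℕ) : bSum n p = ∑ k ∈ Finset.range n, p k := by
  induction n with
  | zero => rfl
  | succ n ih => rw [Finset.sum_range_succ, ← ih]; rfl

@[fun_prop] theorem cp_bSum {n : α → ℕ} {p : α → ℕ → ℕ} (h : Computable n)
    (h2 : Computable fun x : α × ℕ => p x.1 x.2) : Computable fun x => bSum (n x) (p x) := by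
  unfold bSum
  fun_prop

/-- Computable map over a list given by `List.range`. -/
@[fun_prop] theorem cp_map_range {n : α → ℕ} {p : α → ℕ → β} (h : Computable n)
    (h2 : Computable fun x : α × ℕ => p x.1 x.2) :
    Computable fun x => (List.range (n x)).map (p x) := by
  have : Computable fun x =>
      Nat.rec (motive := fun _ => List β) [] (fun k r => r ++ [p x k]) (n x) := by
    fun_prop
  refine this.of_eq fun x => ?_
  induction n x with
  | zero => rfl
  | succ n ih => rw [List.range_succ, List.map_append, ← ih]; rfl

/-- A total function with computable graph is computable. -/
theorem computable_of_graph [DecidableEq β] {f : α → β}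
    (h : Computable fun p : α × β => decide (f p.1 = p.2)) : Computable f := by
  obtain ⟨d, hd, hf⟩ : ∃ d : α → β → Bool, (Computable fun p : α × β => d p.1 p.2) ∧
      ∀ x b, d x b = true ↔ f x = b := ⟨fun x b => decide (f x = b), h, by simp⟩
  have h1 : Computable₂ fun (x : α) (n : ℕ) =>
      ((Encodable.decode n : Option β).bind fun b => bif d x b then some b else none) := by
    unfold Computable₂
    fun_prop
  refine (Partrec.rfindOpt h1).of_eq_tot fun x => ?_
  have hdd : (Nat.rfindOpt fun n =>
      ((Encodable.decode n : Option β).bind fun b => bif d x b then some b else none)).Dom := by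
    rw [Nat.rfindOpt_dom]
    exact ⟨Encodable.encode (f x), f x, by simp [(hf x (f x)).2 rfl]⟩
  obtain ⟨v, hv⟩ := Part.dom_iff_mem.1 hdd
  obtain ⟨n, hn⟩ := Nat.rfindOpt_spec hv
  have : f x = v := by
    rw [Option.mem_def, Option.bind_eq_some_iff] at hn
    obtain ⟨b, _, hb⟩ := hn
    cases hfb : d x b
    · simp [hfb] at hb
    · simp [hfb] at hb; rw [← hb]; exact (hf x b).1 hfb
  rw [this]; exact hv

end Toolbox

end RandProb

namespace RandProb

/-! ### Rationals are primitively encodable (for the frozen encoding) -/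

theorem int_encode_ofNat (n : ℕ) : Encodable.encode (n : ℤ) = 2 * n := rfl
theorem int_encode_negSucc (n : ℕ) : Encodable.encode (Int.negSucc n) = 2 * n + 1 := rfl

theorem int_natAbs_encode (z : ℤ) : z.natAbs = (Encodable.encode z + 1) / 2 := by
  rcases z with n | n
  · have := int_encode_ofNat n
    simp only [Int.ofNat_eq_natCast, this, Int.natAbs_natCast]; omega
  · rw [int_encode_negSucc, Int.natAbs_negSucc]; omega

theorem rat_encode (q : ℚ) : Encodable.encode q = Nat.pair (Encodable.encode q.num) q.den := rfl

/-- The valid codes of rationals. -/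
def ratValid (n : ℕ) : Prop :=
  0 < n.unpair.2 ∧ ((n.unpair.1 + 1) / 2).Coprime n.unpair.2

theorem rat_decode_valid {n : ℕ} (h : ratValid n) :
    ∃ q : ℚ, Encodable.encode q = n := by
  obtain ⟨z, hz⟩ : ∃ z : ℤ, Encodable.encode z = n.unpair.1 :=
    ⟨Denumerable.ofNat ℤ n.unpair.1, Denumerable.encode_ofNat _⟩
  refine ⟨⟨z, n.unpair.2, h.1.ne', ?_⟩, ?_⟩
  · rw [int_natAbs_encode, hz]; exact h.2
  · rw [rat_encode]; simp only [hz]; exact Nat.pair_unpair n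

theorem rat_valid_encode (q : ℚ) : ratValid (Encodable.encode q) := by
  rw [rat_encode]
  refine ⟨by simpa using q.den_pos, ?_⟩
  simp only [Nat.unpair_pair]
  rw [← int_natAbs_encode]; exact q.reduced

theorem rat_decode_mem {n : ℕ} {q : ℚ} (h : Encodable.decode n = some q) :
    Encodable.encode q = n := by
  rw [show (Encodable.decode n : Option ℚ) = _ from Encodable.decode_ofEquiv _ n] at h
  rw [Option.map_eq_some_iff] at h
  obtain ⟨⟨z, d, hd1, hd2⟩, h1, h2⟩ := h
  have hq : q.num = z ∧ q.den = d := by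
    rw [← h2]
    constructor <;> rfl
  rw [rat_encode, hq.1, hq.2]
  rw [Encodable.decode_sigma_val] at h1
  rw [Option.bind_eq_some_iff] at h1
  obtain ⟨a, ha, h3⟩ := h1
  rw [Option.map_eq_some_iff] at h3
  obtain ⟨⟨d', hd'⟩, h4, h5⟩ := h3
  have e1 : a = z := congrArg Sigma.fst h5
  subst e1
  have e2 : (⟨d', hd'⟩ : { d : ℕ // 0 < d ∧ a.natAbs.Coprime d }) = ⟨d, hd1, hd2⟩ :=
    eq_of_heq (Sigma.mk.inj h5).2
  have e3 : d' = d := congrArg Subtype.val e2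
  subst e3
  replace h4 : Encodable.decodeSubtype n.unpair.2 = some _ := h4
  unfold Encodable.decodeSubtype at h4
  simp only [Encodable.decode_nat, Option.bind_some] at h4
  split_ifs at h4 with h6
  have e4 : n.unpair.2 = d' := congrArg Subtype.val (Option.some.inj h4)
  have e5 : Encodable.encode a = n.unpair.1 := by
    have := (Denumerable.decode_eq_ofNat ℤ n.unpair.1)
    rw [this] at ha
    rw [← Option.some.inj ha]; exact Denumerable.encode_ofNat _
  rw [e5, ← e4]; exact Nat.pair_unpair n

open Classical in
theorem rat_encode_decode (n : ℕ) :
    Encodable.encode (Encodable.decode n : Option ℚ) = if ratValid n then n + 1 else 0 := by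
  split_ifs with h
  · obtain ⟨q, hq⟩ := rat_decode_valid h
    rw [← hq, Encodable.encodek]; rfl
  · cases h2 : (Encodable.decode n : Option ℚ) with
    | none => rfl
    | some q => exact absurd (rat_decode_mem h2 ▸ rat_valid_encode q) h

theorem ratValid_iff (n : ℕ) : ratValid n ↔ (0 < n.unpair.2 ∧ ∀ x < n.unpair.2 + 1,
    (x = 1 ∨ ¬ (((n.unpair.1 + 1) / 2) % x = 0 ∧ n.unpair.2 % x = 0))) := by
  unfold ratValid
  refine and_congr_right fun hpos => ?_
  constructor
  · intro h x _
    by_cases hx : x = 1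
    · exact Or.inl hx
    · refine Or.inr fun ⟨h1, h2⟩ => hx ?_
      exact Nat.eq_one_of_dvd_coprimes h (Nat.dvd_of_mod_eq_zero h1) (Nat.dvd_of_mod_eq_zero h2)
  · intro h
    have h1 := h (Nat.gcd ((n.unpair.1 + 1) / 2) n.unpair.2)
      (Nat.lt_succ_of_le (Nat.gcd_le_right _ hpos))
    rcases h1 with h1 | h1
    · exact h1
    · exact absurd ⟨Nat.mod_eq_zero_of_dvd (Nat.gcd_dvd_left _ _),
        Nat.mod_eq_zero_of_dvd (Nat.gcd_dvd_right _ _)⟩ h1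

theorem ratValid_prim : PrimrecPred ratValid := by
  have hR : PrimrecRel fun (x : ℕ) (n : ℕ) =>
      (x = 1 ∨ ¬ (((n.unpair.1 + 1) / 2) % x = 0 ∧ n.unpair.2 % x = 0)) := by
    have hx : Primrec fun p : ℕ × ℕ => p.1 := Primrec.fst
    have hn : Primrec fun p : ℕ × ℕ => p.2.unpair := Primrec.unpair.comp Primrec.snd
    have h1 : PrimrecPred fun p : ℕ × ℕ => p.1 = 1 := Primrec.eq.comp hx (Primrec.const 1)
    have h2 : PrimrecPred fun p : ℕ × ℕ => ((p.2.unpair.1 + 1) / 2) % p.1 = 0 :=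
      Primrec.eq.comp (Primrec.nat_mod.comp (Primrec.nat_div.comp
        (Primrec.succ.comp (Primrec.fst.comp hn)) (Primrec.const 2)) hx) (Primrec.const 0)
    have h3 : PrimrecPred fun p : ℕ × ℕ => p.2.unpair.2 % p.1 = 0 :=
      Primrec.eq.comp (Primrec.nat_mod.comp (Primrec.snd.comp hn) hx) (Primrec.const 0)
    exact h1.or (h2.and h3).not
  have h2 : Primrec fun n : ℕ => n.unpair.2 := Primrec.snd.comp Primrec.unpair
  have h4 : PrimrecPred fun n : ℕ => ∀ x < n.unpair.2 + 1,
      (x = 1 ∨ ¬ (((n.unpair.1 + 1) / 2) % x = 0 ∧ n.unpair.2 % x = 0)) :=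
    (hR.forall_lt).comp (Primrec.succ.comp h2) Primrec.id
  have h5 : PrimrecPred fun n : ℕ => 0 < n.unpair.2 := Primrec.nat_lt.comp (Primrec.const 0) h2
  exact (h5.and h4).of_eq fun n => (ratValid_iff n).symm

instance ratPrimcodable : Primcodable ℚ where
  toEncodable := Rat.instEncodable
  prim := by
    classical
    have : Primrec fun n : ℕ => if ratValid n then n + 1 else 0 :=
      Primrec.ite ratValid_prim Primrec.succ (Primrec.const 0)
    exact (Primrec.nat_iff.1 this).of_eq fun n => (rat_encode_decode n).symm

/-! ### Rational arithmetic is computable -/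

/-- positive part of the numerator -/
def rp (q : ℚ) : ℕ := q.num.toNat
/-- negative part of the numerator -/
def rn (q : ℚ) : ℕ := (-q.num).toNat

theorem rp_eq (q : ℚ) : rp q = if (Encodable.encode q).unpair.1 % 2 = 0 then
    (Encodable.encode q).unpair.1 / 2 else 0 := by
  rw [rat_encode, Nat.unpair_pair, rp]
  rcases q.num with n | n
  · have := int_encode_ofNat n
    simp only [Int.ofNat_eq_natCast, this]; simp
  · rw [int_encode_negSucc]; rw [if_neg (by omega)]; rfl

theorem rn_eq (q : ℚ) : rn q = if (Encodable.encode q).unpair.1 % 2 = 0 then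
    0 else (Encodable.encode q).unpair.1 / 2 + 1 := by
  rw [rat_encode, Nat.unpair_pair, rn]
  rcases q.num with n | n
  · have := int_encode_ofNat n
    simp only [Int.ofNat_eq_natCast, this]; simp
  · rw [int_encode_negSucc]; rw [if_neg (by omega)]
    rw [Int.neg_negSucc, Int.toNat_natCast]; omega

section
variable {α : Type*} [Primcodable α]

@[fun_prop] theorem cp_rp {f : α → ℚ} (h : Computable f) : Computable fun x => rp (f x) := by
  have : Computable fun q : ℚ => bif decide ((Encodable.encode q).unpair.1 % 2 = 0) then
    (Encodable.encode q).unpair.1 / 2 else 0 := by fun_prop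
  exact (this.of_eq fun q => by rw [rp_eq, Bool.cond_decide]).comp h
@[fun_prop] theorem cp_rn {f : α → ℚ} (h : Computable f) : Computable fun x => rn (f x) := by
  have : Computable fun q : ℚ => bif decide ((Encodable.encode q).unpair.1 % 2 = 0) then
    0 else (Encodable.encode q).unpair.1 / 2 + 1 := by fun_prop
  exact (this.of_eq fun q => by rw [rn_eq, Bool.cond_decide]).comp h
@[fun_prop] theorem cp_den {f : α → ℚ} (h : Computable f) : Computable fun x => (f x).den := by
  have : Computable fun q : ℚ => (Encodable.encode q).unpair.2 := by fun_prop
  exact (this.of_eq fun q => by rw [rat_encode, Nat.unpair_pair]).comp h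

theorem rat_eq_parts (q : ℚ) : q = ((rp q : ℚ) - (rn q : ℚ)) / (q.den : ℚ) := by
  have h : (q.num : ℤ) = (rp q : ℤ) - (rn q : ℤ) := by
    unfold rp rn; omega
  have h2 : (q.num : ℚ) = (rp q : ℚ) - (rn q : ℚ) := by rw [h]; push_cast; ring
  rw [← h2]; exact (Rat.num_div_den q).symm

theorem den_pos' (q : ℚ) : (0 : ℚ) < (q.den : ℚ) := by exact_mod_cast q.den_pos

theorem rat_le_parts (a b : ℚ) : a ≤ b ↔ rp a * b.den + rn b * a.den ≤ rp b * a.den + rn a * b.den := by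
  conv_lhs => rw [rat_eq_parts a, rat_eq_parts b]
  rw [div_le_div_iff₀ (den_pos' a) (den_pos' b)]
  rw [← Nat.cast_le (α := ℚ)]
  push_cast
  constructor <;> intro h <;> nlinarith

@[fun_prop] theorem cp_rat_le {f g : α → ℚ} (h : Computable f) (h2 : Computable g) :
    Computable fun x => decide (f x ≤ g x) := by
  have : Computable fun x => decide (rp (f x) * (g x).den + rn (g x) * (f x).den
    ≤ rp (g x) * (f x).den + rn (f x) * (g x).den) := by fun_prop
  exact this.of_eq fun x => by rw [decide_eq_decide]; exact (rat_le_parts _ _).symm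
@[fun_prop] theorem cp_rat_lt {f g : α → ℚ} (h : Computable f) (h2 : Computable g) :
    Computable fun x => decide (f x < g x) := by
  have : Computable fun x => !(decide (g x ≤ f x)) := by fun_prop
  exact this.of_eq fun x => by simp [← not_le]

theorem rat_add_graph (a b c : ℚ) : a + b = c ↔
    rp a * b.den * c.den + rp b * a.den * c.den + rn c * a.den * b.den =
    rn a * b.den * c.den + rn b * a.den * c.den + rp c * a.den * b.den := by
  conv_lhs => rw [rat_eq_parts a, rat_eq_parts b, rat_eq_parts c]
  rw [div_add_div _ _ (den_pos' a).ne' (den_pos' b).ne',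
    div_eq_div_iff (mul_pos (den_pos' a) (den_pos' b)).ne' (den_pos' c).ne']
  rw [← Nat.cast_inj (R := ℚ)]
  push_cast
  constructor <;> intro h <;> linarith

theorem rat_mul_graph (a b c : ℚ) : a * b = c ↔
    (rp a * rp b + rn a * rn b) * c.den + rn c * a.den * b.den =
    (rp a * rn b + rn a * rp b) * c.den + rp c * a.den * b.den := by
  conv_lhs => rw [rat_eq_parts a, rat_eq_parts b, rat_eq_parts c]
  rw [div_mul_div_comm,
    div_eq_div_iff (mul_pos (den_pos' a) (den_pos' b)).ne' (den_pos' c).ne']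
  rw [← Nat.cast_inj (R := ℚ)]
  push_cast
  constructor <;> intro h <;> linarith

theorem cp_mul3 {f g k : α → ℕ} (h : Computable f) (h2 : Computable g) (h3 : Computable k) :
    Computable fun x => f x * g x * k x := cp_nat_mul (cp_nat_mul h h2) h3

theorem cp_add3 {f g k : α → ℕ} (h : Computable f) (h2 : Computable g) (h3 : Computable k) :
    Computable fun x => f x + g x + k x := cp_nat_add (cp_nat_add h h2) h3

@[fun_prop] theorem cp_rat_add {f g : α → ℚ} (h : Computable f) (h2 : Computable g) :
    Computable fun x => f x + g x := by
  refine computable_of_graph ?_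
  have ha : Computable fun p : α × ℚ => f p.1 := h.comp Computable.fst
  have hb : Computable fun p : α × ℚ => g p.1 := h2.comp Computable.fst
  have hc : Computable fun p : α × ℚ => p.2 := Computable.snd
  have := cp_eq
    (cp_add3 (cp_mul3 (cp_rp ha) (cp_den hb) (cp_den hc)) (cp_mul3 (cp_rp hb) (cp_den ha) (cp_den hc))
      (cp_mul3 (cp_rn hc) (cp_den ha) (cp_den hb)))
    (cp_add3 (cp_mul3 (cp_rn ha) (cp_den hb) (cp_den hc)) (cp_mul3 (cp_rn hb) (cp_den ha) (cp_den hc))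
      (cp_mul3 (cp_rp hc) (cp_den ha) (cp_den hb)))
  exact this.of_eq fun p => by rw [decide_eq_decide]; exact (rat_add_graph _ _ _).symm
@[fun_prop] theorem cp_rat_mul {f g : α → ℚ} (h : Computable f) (h2 : Computable g) :
    Computable fun x => f x * g x := by
  refine computable_of_graph ?_
  have ha : Computable fun p : α × ℚ => f p.1 := h.comp Computable.fst
  have hb : Computable fun p : α × ℚ => g p.1 := h2.comp Computable.fst
  have hc : Computable fun p : α × ℚ => p.2 := Computable.snd
  have := cp_eq
    (cp_nat_add (cp_nat_mul (cp_nat_add (cp_nat_mul (cp_rp ha) (cp_rp hb))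
      (cp_nat_mul (cp_rn ha) (cp_rn hb))) (cp_den hc)) (cp_mul3 (cp_rn hc) (cp_den ha) (cp_den hb)))
    (cp_nat_add (cp_nat_mul (cp_nat_add (cp_nat_mul (cp_rp ha) (cp_rn hb))
      (cp_nat_mul (cp_rn ha) (cp_rp hb))) (cp_den hc)) (cp_mul3 (cp_rp hc) (cp_den ha) (cp_den hb)))
  exact this.of_eq fun p => by rw [decide_eq_decide]; exact (rat_mul_graph _ _ _).symm
@[fun_prop] theorem cp_rat_sub {f g : α → ℚ} (h : Computable f) (h2 : Computable g) :
    Computable fun x => f x - g x := by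
  have : Computable fun x => f x + (-1) * g x := by fun_prop
  exact this.of_eq fun x => by ring
@[fun_prop] theorem cp_rat_natCast {f : α → ℕ} (h : Computable f) :
    Computable fun x => (f x : ℚ) := by
  have : Computable fun n : ℕ => Nat.rec (motive := fun _ => ℚ) 0 (fun _ r => r + 1) n := by
    fun_prop
  refine (this.of_eq fun n => ?_ : Computable fun n : ℕ => (n : ℚ)).comp h
  induction n with
  | zero => simp
  | succ n ih => rw [Nat.cast_succ, ← ih]
@[fun_prop] theorem cp_rat_pow {f : α → ℚ} {g : α → ℕ} (h : Computable f) (h2 : Computable g) :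
    Computable fun x => f x ^ g x := by
  have : Computable fun x => Nat.rec (motive := fun _ => ℚ) 1 (fun _ r => r * f x) (g x) := by
    fun_prop
  refine this.of_eq fun x => ?_
  induction g x with
  | zero => simp
  | succ n ih => rw [pow_succ, ← ih]
@[fun_prop] theorem cp_rat_min {f g : α → ℚ} (h : Computable f) (h2 : Computable g) :
    Computable fun x => min (f x) (g x) := by
  have : Computable fun x => bif decide (f x ≤ g x) then f x else g x := by fun_prop
  exact this.of_eq fun x => by rw [Bool.cond_decide, min_def]

/-- total decoding of rationals -/
def dq (n : ℕ) : ℚ := (Encodable.decode n : Option ℚ).getD 0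

theorem dq_encode (q : ℚ) : dq (Encodable.encode q) = q := by simp [dq]

@[fun_prop] theorem cp_dq {f : α → ℕ} (h : Computable f) : Computable fun x => dq (f x) := by
  unfold dq; fun_prop
end

end RandProb

namespace RandProb

/-! ### Evaluation with partial oracles -/

/-- Evaluation with a partial oracle. -/
def evalP (O : ℕ →. ℕ) : CodeO → ℕ →. ℕ
  | .zero => pure 0
  | .succ => Nat.succ
  | .left => ↑fun n : ℕ => n.unpair.1
  | .right => ↑fun n : ℕ => n.unpair.2
  | .oracle => O
  | .pair cf cg => fun n => Nat.pair <$> evalP O cf n <*> evalP O cg n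
  | .comp cf cg => fun n => evalP O cg n >>= evalP O cf
  | .prec cf cg =>
    Nat.unpaired fun a n =>
      n.rec (evalP O cf a) fun y IH => do
        let i ← IH
        evalP O cg (Nat.pair a (Nat.pair y i))
  | .rfind' cf =>
    Nat.unpaired fun a m =>
      (Nat.rfind fun n => (fun m => m = 0) <$> evalP O cf (Nat.pair a (n + m))).map (· + m)

theorem evalP_coe (O : ℕ → ℕ) (c : CodeO) : evalP (↑O) c = c.eval O := by
  induction c with
  | zero => rfl
  | succ => rfl
  | left => rfl
  | right => rfl
  | oracle => rfl
  | pair cf cg h1 h2 => simp only [evalP, CodeO.eval, h1, h2]; rfl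
  | comp cf cg h1 h2 => simp only [evalP, CodeO.eval, h1, h2]; rfl
  | prec cf cg h1 h2 => simp only [evalP, CodeO.eval, h1, h2]; rfl
  | rfind' cf h1 => simp only [evalP, CodeO.eval, h1]; rfl

theorem mem_pairP {O : ℕ →. ℕ} {cf cg : CodeO} {n v : ℕ} :
    v ∈ evalP O (.pair cf cg) n ↔ ∃ a ∈ evalP O cf n, ∃ b ∈ evalP O cg n, Nat.pair a b = v := by
  simp [evalP, Seq.seq]

theorem mem_compP {O : ℕ →. ℕ} {cf cg : CodeO} {n v : ℕ} :
    v ∈ evalP O (.comp cf cg) n ↔ ∃ a ∈ evalP O cg n, v ∈ evalP O cf a :=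
  Part.mem_bind_iff

theorem precP_zero {O : ℕ →. ℕ} {cf cg : CodeO} {a : ℕ} :
    evalP O (.prec cf cg) (Nat.pair a 0) = evalP O cf a := by
  simp [evalP]

theorem mem_precP_succ {O : ℕ →. ℕ} {cf cg : CodeO} {a n v : ℕ} :
    v ∈ evalP O (.prec cf cg) (Nat.pair a (n+1)) ↔
      ∃ i ∈ evalP O (.prec cf cg) (Nat.pair a n),
        v ∈ evalP O cg (Nat.pair a (Nat.pair n i)) := by
  simp [evalP]

theorem mem_rfindP {O : ℕ →. ℕ} {cf : CodeO} {a m v : ℕ} :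
    v ∈ evalP O (.rfind' cf) (Nat.pair a m) ↔
      ∃ n, n + m = v ∧ 0 ∈ evalP O cf (Nat.pair a (n + m)) ∧
        ∀ j < n, ∃ w ∈ evalP O cf (Nat.pair a (j + m)), w ≠ 0 := by
  simp only [evalP, Nat.unpaired, Nat.unpair_pair, Part.mem_map_iff]
  refine exists_congr fun n => ?_
  rw [and_comm]
  refine and_congr_right fun _ => ?_
  refine Nat.mem_rfind.trans (and_congr ?_ ?_)
  · simp
  · refine forall_congr' fun j => forall_congr' fun _ => ?_
    simp

theorem evalP_mono {O O' : ℕ →. ℕ} (h : ∀ n v, v ∈ O n → v ∈ O' n) (c : CodeO) :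
    ∀ n v, v ∈ evalP O c n → v ∈ evalP O' c n := by
  induction c with
  | zero => exact fun n v h => h
  | succ => exact fun n v h => h
  | left => exact fun n v h => h
  | right => exact fun n v h => h
  | oracle => exact h
  | pair cf cg h1 h2 =>
    intro n v
    rw [mem_pairP, mem_pairP]
    rintro ⟨a, ha, b, hb, e⟩
    exact ⟨a, h1 _ _ ha, b, h2 _ _ hb, e⟩
  | comp cf cg h1 h2 =>
    intro n v
    rw [mem_compP, mem_compP]
    rintro ⟨a, ha, hb⟩
    exact ⟨a, h2 _ _ ha, h1 _ _ hb⟩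
  | prec cf cg h1 h2 =>
    intro n
    rw [← Nat.pair_unpair n]
    induction n.unpair.2 with
    | zero => intro v; rw [precP_zero, precP_zero]; exact h1 _ _
    | succ k ih =>
      intro v
      rw [mem_precP_succ, mem_precP_succ]
      rintro ⟨i, hi, hv⟩
      exact ⟨i, ih _ hi, h2 _ _ hv⟩
  | rfind' cf h1 =>
    intro n v
    rw [← Nat.pair_unpair n, mem_rfindP, mem_rfindP]
    rintro ⟨m, e, h3, h4⟩
    refine ⟨m, e, h1 _ _ h3, fun j hj => ?_⟩
    obtain ⟨w, hw, hw2⟩ := h4 j hj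
    exact ⟨w, h1 _ _ hw, hw2⟩

/-- Continuity for increasing sequences of partial oracles. -/
theorem evalP_cont {O : ℕ → ℕ →. ℕ} {O' : ℕ →. ℕ}
    (hm : ∀ k l, k ≤ l → ∀ n v, v ∈ O k n → v ∈ O l n)
    (h : ∀ n v, v ∈ O' n → ∃ k, v ∈ O k n) (c : CodeO) :
    ∀ n v, v ∈ evalP O' c n → ∃ k, v ∈ evalP (O k) c n := by
  have mono : ∀ {k l}, k ≤ l → ∀ {c n v}, v ∈ evalP (O k) c n → v ∈ evalP (O l) c n :=
    fun hkl _ _ _ hv => evalP_mono (hm _ _ hkl) _ _ _ hv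
  induction c with
  | zero => exact fun n v h => ⟨0, h⟩
  | succ => exact fun n v h => ⟨0, h⟩
  | left => exact fun n v h => ⟨0, h⟩
  | right => exact fun n v h => ⟨0, h⟩
  | oracle => exact h
  | pair cf cg h1 h2 =>
    intro n v
    rw [mem_pairP]
    rintro ⟨a, ha, b, hb, e⟩
    obtain ⟨k, hk⟩ := h1 _ _ ha
    obtain ⟨l, hl⟩ := h2 _ _ hb
    exact ⟨max k l, mem_pairP.2 ⟨a, mono (le_max_left _ _) hk, b, mono (le_max_right _ _) hl, e⟩⟩
  | comp cf cg h1 h2 =>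
    intro n v
    rw [mem_compP]
    rintro ⟨a, ha, hb⟩
    obtain ⟨k, hk⟩ := h2 _ _ ha
    obtain ⟨l, hl⟩ := h1 _ _ hb
    exact ⟨max k l, mem_compP.2 ⟨a, mono (le_max_left _ _) hk, mono (le_max_right _ _) hl⟩⟩
  | prec cf cg h1 h2 =>
    intro n
    rw [← Nat.pair_unpair n]
    induction n.unpair.2 with
    | zero => intro v; simp only [precP_zero]; exact h1 _ _
    | succ m ih =>
      intro v
      rw [mem_precP_succ]
      rintro ⟨i, hi, hv⟩
      obtain ⟨k, hk⟩ := ih _ hi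
      obtain ⟨l, hl⟩ := h2 _ _ hv
      exact ⟨max k l, mem_precP_succ.2 ⟨i, mono (le_max_left _ _) hk, mono (le_max_right _ _) hl⟩⟩
  | rfind' cf h1 =>
    intro n v
    rw [← Nat.pair_unpair n, mem_rfindP]
    rintro ⟨m, e, h3, h4⟩
    obtain ⟨k, hk⟩ := h1 _ _ h3
    have key : ∀ m' ≤ m, ∃ l, ∀ j < m', ∃ w ∈ evalP (O l) cf (Nat.pair n.unpair.1 (j + n.unpair.2)),
        w ≠ 0 := by
      intro m'
      induction m' with
      | zero => exact fun _ => ⟨0, fun j hj => absurd hj (Nat.not_lt_zero _)⟩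
      | succ p ih =>
        intro hp
        obtain ⟨l, hl⟩ := ih (by omega)
        obtain ⟨w, hw, hw2⟩ := h4 p (by omega)
        obtain ⟨l2, hl2⟩ := h1 _ _ hw
        refine ⟨max l l2, fun j hj => ?_⟩
        rcases Nat.lt_succ_iff_lt_or_eq.1 hj with hj | rfl
        · obtain ⟨w', hw', hw2'⟩ := hl j hj
          exact ⟨w', mono (le_max_left _ _) hw', hw2'⟩
        · exact ⟨w, mono (le_max_right _ _) hl2, hw2⟩
    obtain ⟨l, hl⟩ := key m le_rfl
    refine ⟨max k l, mem_rfindP.2 ⟨m, e, mono (le_max_left _ _) hk, fun j hj => ?_⟩⟩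
    obtain ⟨w, hw, hw2⟩ := hl j hj
    exact ⟨w, mono (le_max_right _ _) hw, hw2⟩

/-- Finite partial oracle. -/
def oP (τ : List Bool) : ℕ →. ℕ := fun n => ((τ[n]?).map fun b => cond b 1 0 : Option ℕ)

theorem mem_oP {τ : List Bool} {n v : ℕ} : v ∈ oP τ n ↔ ∃ b, τ[n]? = some b ∧ cond b 1 0 = v := by
  simp [oP]

theorem initSeg_length (X : Cantor) (k : ℕ) : (initSeg X k).length = k := by simp [initSeg]

theorem initSeg_get (X : Cantor) (k n : ℕ) :
    (initSeg X k)[n]? = if n < k then some (X n) else none := by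
  unfold initSeg
  rw [List.getElem?_map]
  split_ifs with h
  · rw [List.getElem?_range h]; rfl
  · rw [List.getElem?_eq_none (by simpa using h)]; rfl

theorem initSeg_take (X : Cantor) {j k : ℕ} (h : j ≤ k) : (initSeg X k).take j = initSeg X j := by
  unfold initSeg
  rw [← List.map_take, List.take_range, min_eq_left h]

theorem mem_oP_initSeg {X : Cantor} {k n v : ℕ} :
    v ∈ oP (initSeg X k) n ↔ n < k ∧ v = oX X n := by
  rw [mem_oP, initSeg_get]
  split_ifs with h
  · simp [h, oX, eq_comm]
  · simp [h]

theorem evalP_sound {X : Cantor} {k : ℕ} {c : CodeO} {n v : ℕ}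
    (h : v ∈ evalP (oP (initSeg X k)) c n) : v ∈ c.eval (oX X) n := by
  rw [← evalP_coe]
  refine evalP_mono (fun n v hv => ?_) _ _ _ h
  rw [mem_oP_initSeg] at hv
  rw [hv.2]; exact Part.mem_some _

theorem evalP_complete {X : Cantor} {c : CodeO} {n v : ℕ}
    (h : v ∈ c.eval (oX X) n) : ∃ k, v ∈ evalP (oP (initSeg X k)) c n := by
  rw [← evalP_coe] at h
  refine evalP_cont (O := fun k => oP (initSeg X k)) (fun k l hkl n v hv => ?_) (fun n v hv => ?_)
    _ _ _ h
  · rw [mem_oP_initSeg] at hv ⊢; exact ⟨hv.1.trans_le hkl, hv.2⟩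
  · refine ⟨n+1, ?_⟩
    rw [mem_oP_initSeg]
    exact ⟨Nat.lt_succ_self n, Part.mem_some_iff.1 hv⟩

/-! ### Translation to Mathlib codes -/

open Nat.Partrec (Code)

theorem exists_lookup : ∃ c : Code, ∀ τ n, c.eval (Nat.pair (Encodable.encode (τ : List Bool)) n) = oP τ n := by
  have h : Computable fun m : ℕ => ((Encodable.decode m.unpair.1 : Option (List Bool)).bind
      fun τ => (τ[m.unpair.2]?).map fun b => bif b then 1 else 0) := by fun_prop
  obtain ⟨c, hc⟩ := Code.exists_code.1 (Partrec.nat_iff.1 h.ofOption)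
  refine ⟨c, fun τ n => ?_⟩
  rw [hc]
  simp [oP]

/-- The lookup code. -/
noncomputable def lookupC : Code := exists_lookup.choose

/-- rearranging code: `((τ,a),z) ↦ (τ,(a,z))`. -/
def reC : Code := .pair (.comp .left .left) (.pair (.comp .right .left) .right)
/-- rearranging code: `(τ,(a,z)) ↦ ((τ,a),z)`. -/
def raC : Code := .pair (.pair .left (.comp .left .right)) (.comp .right .right)

theorem code_comp_eval (f g : Code) (n : ℕ) :
    (Code.comp f g).eval n = (g.eval n).bind fun m => f.eval m := rfl
theorem code_pair_eval (f g : Code) (n : ℕ) : (Code.pair f g).eval n =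
    (f.eval n).bind fun a => (g.eval n).map (Nat.pair a) := by
  simp [Code.eval, Seq.seq, Part.bind_map]
theorem code_left_eval (n : ℕ) : Code.left.eval n = Part.some n.unpair.1 := rfl
theorem code_right_eval (n : ℕ) : Code.right.eval n = Part.some n.unpair.2 := rfl
theorem code_succ_eval (n : ℕ) : Code.succ.eval n = Part.some (n + 1) := rfl

theorem reC_eval (t a z : ℕ) :
    reC.eval (Nat.pair (Nat.pair t a) z) = Part.some (Nat.pair t (Nat.pair a z)) := by
  simp [reC, code_comp_eval, code_pair_eval, code_left_eval, code_right_eval]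
theorem raC_eval (t a z : ℕ) :
    raC.eval (Nat.pair t (Nat.pair a z)) = Part.some (Nat.pair (Nat.pair t a) z) := by
  simp [raC, code_comp_eval, code_pair_eval, code_left_eval, code_right_eval]

/-- Translation of oracle codes. -/
noncomputable def tr : CodeO → Code
  | .zero => .zero
  | .succ => .comp .succ .right
  | .left => .comp .left .right
  | .right => .comp .right .right
  | .oracle => lookupC
  | .pair cf cg => .pair (tr cf) (tr cg)
  | .comp cf cg => .comp (tr cf) (.pair .left (tr cg))
  | .prec cf cg => .comp (.prec (tr cf) (.comp (tr cg) reC)) raC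
  | .rfind' cf => .comp (.rfind' (.comp (tr cf) reC)) raC

theorem tr_eval (τ : List Bool) (c : CodeO) : ∀ n,
    (tr c).eval (Nat.pair (Encodable.encode τ) n) = evalP (oP τ) c n := by
  induction c with
  | zero => intro n; simp only [tr, Code.eval, evalP]; rfl
  | succ =>
    intro n
    rw [tr, code_comp_eval, code_right_eval, Part.bind_some, Nat.unpair_pair, code_succ_eval]; rfl
  | left =>
    intro n
    rw [tr, code_comp_eval, code_right_eval, Part.bind_some, Nat.unpair_pair, code_left_eval]; rfl
  | right =>
    intro n
    rw [tr, code_comp_eval, code_right_eval, Part.bind_some, Nat.unpair_pair, code_right_eval]; rfl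
  | oracle => intro n; exact exists_lookup.choose_spec τ n
  | pair cf cg h1 h2 => intro n; simp only [tr, Code.eval, evalP, h1, h2]
  | comp cf cg h1 h2 =>
    intro n
    ext v
    rw [mem_compP, tr, code_comp_eval, code_pair_eval, code_left_eval, h2]
    simp [h1]
  | prec cf cg h1 h2 =>
    intro n
    rw [← Nat.pair_unpair n]
    generalize n.unpair.1 = a
    have e0 : (tr (.prec cf cg)).eval (Nat.pair (Encodable.encode τ) (Nat.pair a n.unpair.2)) =
      (Code.prec (tr cf) (.comp (tr cg) reC)).eval
        (Nat.pair (Nat.pair (Encodable.encode τ) a) n.unpair.2) := by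
      rw [tr, code_comp_eval, raC_eval, Part.bind_some]
    rw [e0]
    induction n.unpair.2 with
    | zero => rw [precP_zero, Code.eval_prec_zero, h1]
    | succ k ih =>
      rw [Code.eval_prec_succ, ih]
      ext v
      rw [mem_precP_succ]
      simp only [Part.bind_eq_bind, Part.mem_bind_iff, code_comp_eval, reC_eval, Part.bind_some, h2]
  | rfind' cf h1 =>
    intro n
    rw [← Nat.pair_unpair n]
    generalize n.unpair.1 = a
    generalize n.unpair.2 = m
    rw [tr, code_comp_eval, raC_eval, Part.bind_some]
    simp only [Code.eval, evalP, Nat.unpaired, Nat.unpair_pair]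
    congr 2
    funext k
    have := h1 (Nat.pair a (k + m))
    have h3 : (Code.comp (tr cf) reC).eval (Nat.pair (Nat.pair (Encodable.encode τ) a) (k + m)) =
        evalP (oP τ) cf (Nat.pair a (k + m)) := by
      rw [code_comp_eval, reC_eval, Part.bind_some, this]
    exact congrArg _ h3

theorem encode_inj : ∀ c d : CodeO, c.encode = d.encode → c = d := by
  intro c
  induction c with
  | zero => intro d h; cases d <;> simp only [CodeO.encode] at h <;> first | rfl | omega
  | succ => intro d h; cases d <;> simp only [CodeO.encode] at h <;> first | rfl | omega
  | left => intro d h; cases d <;> simp only [CodeO.encode] at h <;> first | rfl | omega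
  | right => intro d h; cases d <;> simp only [CodeO.encode] at h <;> first | rfl | omega
  | oracle => intro d h; cases d <;> simp only [CodeO.encode] at h <;> first | rfl | omega
  | pair cf cg h1 h2 =>
    intro d h; cases d <;> simp only [CodeO.encode] at h <;> try omega
    rename_i a b
    have : Nat.pair cf.encode cg.encode = Nat.pair a.encode b.encode := by omega
    rw [Nat.pair_eq_pair] at this
    rw [h1 _ this.1, h2 _ this.2]
  | comp cf cg h1 h2 =>
    intro d h; cases d <;> simp only [CodeO.encode] at h <;> try omega
    rename_i a b
    have : Nat.pair cf.encode cg.encode = Nat.pair a.encode b.encode := by omega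
    rw [Nat.pair_eq_pair] at this
    rw [h1 _ this.1, h2 _ this.2]
  | prec cf cg h1 h2 =>
    intro d h; cases d <;> simp only [CodeO.encode] at h <;> try omega
    rename_i a b
    have : Nat.pair cf.encode cg.encode = Nat.pair a.encode b.encode := by omega
    rw [Nat.pair_eq_pair] at this
    rw [h1 _ this.1, h2 _ this.2]
  | rfind' cf h1 =>
    intro d h; cases d <;> simp only [CodeO.encode] at h <;> try omega
    rename_i a
    rw [h1 a (by omega)]

theorem encode_surj : ∀ n : ℕ, ∃ c : CodeO, c.encode = n := by
  intro n
  induction n using Nat.strong_induction_on with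
  | _ n ih =>
    by_cases h : n < 5
    · interval_cases n
      · exact ⟨.zero, rfl⟩
      · exact ⟨.succ, rfl⟩
      · exact ⟨.left, rfl⟩
      · exact ⟨.right, rfl⟩
      · exact ⟨.oracle, rfl⟩
    · obtain ⟨p, hp⟩ : ∃ p, p = (n - 5) / 4 := ⟨_, rfl⟩
      obtain ⟨r, hr⟩ : ∃ r, r = (n - 5) % 4 := ⟨_, rfl⟩
      have hpn : p < n := by omega
      obtain ⟨a, ha⟩ := ih p.unpair.1 ((Nat.unpair_left_le p).trans_lt hpn)
      obtain ⟨b, hb⟩ := ih p.unpair.2 ((Nat.unpair_right_le p).trans_lt hpn)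
      have hr4 : r < 4 := by omega
      interval_cases r
      · refine ⟨.pair a b, ?_⟩
        rw [CodeO.encode, ha, hb, Nat.pair_unpair]; omega
      · refine ⟨.prec a b, ?_⟩
        rw [CodeO.encode, ha, hb, Nat.pair_unpair]; omega
      · refine ⟨.comp a b, ?_⟩
        rw [CodeO.encode, ha, hb, Nat.pair_unpair]; omega
      · obtain ⟨a, ha⟩ := ih p hpn
        refine ⟨.rfind' a, ?_⟩
        rw [CodeO.encode, ha]; omega

/-- Decoding of oracle codes. -/
noncomputable def decO (e : ℕ) : CodeO := (encode_surj e).choose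

theorem encode_decO (e : ℕ) : (decO e).encode = e := (encode_surj e).choose_spec
theorem decO_encode (c : CodeO) : decO c.encode = c := encode_inj _ _ (encode_decO _)

/-- Translation on numbers. -/
noncomputable def trN (e : ℕ) : Code := tr (decO e)

@[fun_prop] theorem cp_codepair {α} [Primcodable α] {f g : α → Code} (h : Computable f) (h2 : Computable g) :
    Computable fun x => Code.pair (f x) (g x) := Code.primrec₂_pair.to_comp.comp h h2
@[fun_prop] theorem cp_codecomp {α} [Primcodable α] {f g : α → Code} (h : Computable f) (h2 : Computable g) :
    Computable fun x => Code.comp (f x) (g x) := Code.primrec₂_comp.to_comp.comp h h2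
@[fun_prop] theorem cp_codeprec {α} [Primcodable α] {f g : α → Code} (h : Computable f) (h2 : Computable g) :
    Computable fun x => Code.prec (f x) (g x) := Code.primrec₂_prec.to_comp.comp h h2
@[fun_prop] theorem cp_coderfind {α} [Primcodable α] {f : α → Code} (h : Computable f) :
    Computable fun x => Code.rfind' (f x) := Code.primrec_rfind'.to_comp.comp h

/-- Case distinction for `trStep`. -/
noncomputable def trSel (n r : ℕ) (a b c : Code) : Code :=
  bif decide (n = 0) then .zero else
  bif decide (n = 1) then .comp .succ .right else
  bif decide (n = 2) then .comp .left .right else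
  bif decide (n = 3) then .comp .right .right else
  bif decide (n = 4) then lookupC else
  bif decide (r = 0) then .pair a b
  else bif decide (r = 2) then .comp a (.pair .left b)
  else bif decide (r = 1) then .comp (.prec a (.comp b reC)) raC
  else .comp (.rfind' (.comp c reC)) raC

@[fun_prop] theorem cp_trSel {α} [Primcodable α] {n r : α → ℕ} {a b c : α → Code}
    (hn : Computable n) (hr : Computable r) (ha : Computable a) (hb : Computable b)
    (hc : Computable c) : Computable fun x => trSel (n x) (r x) (a x) (b x) (c x) := by
  unfold trSel
  have hh : ∀ k, Computable fun x => decide (n x = k) := fun k => cp_eq hn (Computable.const k)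
  have hh2 : ∀ k, Computable fun x => decide (r x = k) := fun k => cp_eq hr (Computable.const k)
  have p1 : Computable fun x => Code.comp (a x) (.pair .left (b x)) := by fun_prop
  have p2 : Computable fun x => Code.comp (.prec (a x) (.comp (b x) reC)) raC := by fun_prop
  have p3 : Computable fun x => Code.comp (.rfind' (.comp (c x) reC)) raC := by fun_prop
  exact cp_cond (hh 0) (Computable.const _) <| cp_cond (hh 1) (Computable.const _) <|
    cp_cond (hh 2) (Computable.const _) <| cp_cond (hh 3) (Computable.const _) <|
    cp_cond (hh 4) (Computable.const _) <| cp_cond (hh2 0) (cp_codepair ha hb) <|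
    cp_cond (hh2 2) p1 <| cp_cond (hh2 1) p2 p3

/-- One step of the recursion for `trN`. -/
noncomputable def trStep (l : List Code) : Code :=
  trSel l.length ((l.length - 5) % 4) ((l[((l.length - 5)/4).unpair.1]?).getD .zero)
    ((l[((l.length - 5)/4).unpair.2]?).getD .zero) ((l[(l.length - 5)/4]?).getD .zero)

theorem trStep_comp : Computable trStep := by
  unfold trStep
  fun_prop

theorem trStep_spec (e : ℕ) : trStep ((List.range e).map trN) = trN e := by
  have key : ∀ i < e, (((List.range e).map trN)[i]?).getD .zero = trN i := by
    intro i hi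
    rw [List.getElem?_map, List.getElem?_range hi]; rfl
  generalize hl : (List.range e).map trN = l at key
  have hlen : l.length = e := by rw [← hl]; simp
  obtain ⟨c, rfl⟩ := encode_surj e
  have ec : ∀ d : CodeO, d.encode < c.encode → l[d.encode]?.getD .zero = tr d := by
    intro d hd
    rw [key _ hd, trN, decO_encode]
  unfold trStep trSel
  rw [hlen, trN, decO_encode]
  clear hl hlen key
  cases c with
  | zero => rfl
  | succ => rfl
  | left => rfl
  | right => rfl
  | oracle => rfl
  | pair cf cg =>
    have hf := Nat.left_le_pair cf.encode cg.encode
    have hg := Nat.right_le_pair cf.encode cg.encode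
    have e1 := ec cf (by rw [CodeO.encode]; omega)
    have e2 := ec cg (by rw [CodeO.encode]; omega)
    rw [CodeO.encode]
    have q : (2 * (2 * Nat.pair cf.encode cg.encode) + 5 - 5) / 4 = Nat.pair cf.encode cg.encode := by omega
    have r : (2 * (2 * Nat.pair cf.encode cg.encode) + 5 - 5) % 4 = 0 := by omega
    rw [q, r]
    simp [tr, e1, e2]
  | comp cf cg =>
    have hf := Nat.left_le_pair cf.encode cg.encode
    have hg := Nat.right_le_pair cf.encode cg.encode
    have e1 := ec cf (by rw [CodeO.encode]; omega)
    have e2 := ec cg (by rw [CodeO.encode]; omega)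
    rw [CodeO.encode]
    have q : (2 * (2 * Nat.pair cf.encode cg.encode + 1) + 5 - 5) / 4 = Nat.pair cf.encode cg.encode := by omega
    have r : (2 * (2 * Nat.pair cf.encode cg.encode + 1) + 5 - 5) % 4 = 2 := by omega
    rw [q, r]
    simp [tr, e1, e2]
  | prec cf cg =>
    have hf := Nat.left_le_pair cf.encode cg.encode
    have hg := Nat.right_le_pair cf.encode cg.encode
    have e1 := ec cf (by rw [CodeO.encode]; omega)
    have e2 := ec cg (by rw [CodeO.encode]; omega)
    rw [CodeO.encode]
    have q : (2 * (2 * Nat.pair cf.encode cg.encode) + 6 - 5) / 4 = Nat.pair cf.encode cg.encode := by omega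
    have r : (2 * (2 * Nat.pair cf.encode cg.encode) + 6 - 5) % 4 = 1 := by omega
    rw [q, r]
    simp [tr, e1, e2]
  | rfind' cf =>
    have e1 := ec cf (by rw [CodeO.encode]; omega)
    rw [CodeO.encode]
    have q : (2 * (2 * cf.encode + 1) + 6 - 5) / 4 = cf.encode := by omega
    have r : (2 * (2 * cf.encode + 1) + 6 - 5) % 4 = 3 := by omega
    rw [q, r]
    simp [tr, e1]

theorem trN_comp : Computable trN := by
  have h : Computable₂ fun (_ : Unit) (l : List Code) => some (trStep l) :=
    (cp_some (trStep_comp.comp Computable.snd))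
  have := Computable.nat_strong_rec (fun (_ : Unit) e => trN e) h
    (fun _ e => by rw [← trStep_spec e])
  exact this.comp (Computable.const ()) Computable.id

/-! ### Step-bounded evaluation along finite oracles -/

/-- Step-bounded evaluation of the `e`-th oracle machine on a finite string. -/
noncomputable def evalS (e : ℕ) (τ : List Bool) (n : ℕ) : Option ℕ :=
  Code.evaln τ.length.unpair.2 (trN e) (Nat.pair (Encodable.encode (τ.take τ.length.unpair.1)) n)

@[fun_prop] theorem cp_evalS {α} [Primcodable α] {e : α → ℕ} {τ : α → List Bool} {n : α → ℕ}
    (he : Computable e) (hτ : Computable τ) (hn : Computable n) :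
    Computable fun x => evalS (e x) (τ x) (n x) := by
  unfold evalS
  have h1 := trN_comp.comp he
  have h2 : Computable fun x => (((τ x).length.unpair.2, trN (e x)),
      Nat.pair (Encodable.encode ((τ x).take (τ x).length.unpair.1)) (n x)) := by fun_prop
  exact Code.primrec_evaln.to_comp.comp h2

theorem evalS_iff {X : Cantor} {c : CodeO} {n v : ℕ} :
    v ∈ c.eval (oX X) n ↔ ∃ k, evalS c.encode (initSeg X k) n = some v := by
  constructor
  · intro h
    obtain ⟨k, hk⟩ := evalP_complete h
    rw [← tr_eval] at hk
    obtain ⟨t, ht⟩ := Code.evaln_complete.1 hk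
    refine ⟨Nat.pair k t, ?_⟩
    unfold evalS
    rw [initSeg_length, Nat.unpair_pair, trN, decO_encode, initSeg_take _ (Nat.left_le_pair _ _)]
    exact ht
  · rintro ⟨k, hk⟩
    unfold evalS at hk
    rw [initSeg_length, trN, decO_encode, initSeg_take _ (Nat.unpair_left_le _)] at hk
    have := Code.evaln_sound hk
    rw [tr_eval] at this
    exact evalP_sound this

end RandProb

namespace RandProb
open Nat.Partrec (Code)

/-! ### Constructing oracle codes -/

theorem eval_comp (O : ℕ → ℕ) (f g : CodeO) (n : ℕ) :
    (CodeO.comp f g).eval O n = (g.eval O n).bind fun m => f.eval O m := rfl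
theorem eval_pair (O : ℕ → ℕ) (f g : CodeO) (n : ℕ) : (CodeO.pair f g).eval O n =
    (f.eval O n).bind fun a => (g.eval O n).map (Nat.pair a) := by
  simp [CodeO.eval, Seq.seq, Part.bind_map]
theorem eval_left (O : ℕ → ℕ) (n : ℕ) : CodeO.left.eval O n = Part.some n.unpair.1 := rfl
theorem eval_right (O : ℕ → ℕ) (n : ℕ) : CodeO.right.eval O n = Part.some n.unpair.2 := rfl
theorem eval_zero (O : ℕ → ℕ) (n : ℕ) : CodeO.zero.eval O n = Part.some 0 := rfl
theorem eval_succ (O : ℕ → ℕ) (n : ℕ) : CodeO.succ.eval O n = Part.some (n + 1) := rfl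
theorem eval_oracle (O : ℕ → ℕ) (n : ℕ) : CodeO.oracle.eval O n = Part.some (O n) := rfl
theorem eval_prec_zero (O : ℕ → ℕ) (f g : CodeO) (a : ℕ) :
    (CodeO.prec f g).eval O (Nat.pair a 0) = f.eval O a := by simp [CodeO.eval]
theorem eval_prec_succ (O : ℕ → ℕ) (f g : CodeO) (a k : ℕ) :
    (CodeO.prec f g).eval O (Nat.pair a (k + 1)) = ((CodeO.prec f g).eval O (Nat.pair a k)).bind
      fun i => g.eval O (Nat.pair a (Nat.pair k i)) := by simp [CodeO.eval]

/-- Lifting ordinary codes to oracle codes. -/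
def lift : Code → CodeO
  | .zero => .zero
  | .succ => .succ
  | .left => .left
  | .right => .right
  | .pair cf cg => .pair (lift cf) (lift cg)
  | .comp cf cg => .comp (lift cf) (lift cg)
  | .prec cf cg => .prec (lift cf) (lift cg)
  | .rfind' cf => .rfind' (lift cf)

theorem lift_eval (O : ℕ → ℕ) (c : Code) : (lift c).eval O = c.eval := by
  induction c with
  | zero => rfl
  | succ => rfl
  | left => rfl
  | right => rfl
  | pair cf cg h1 h2 => simp only [lift, Code.eval, CodeO.eval, h1, h2]; rfl
  | comp cf cg h1 h2 => simp only [lift, Code.eval, CodeO.eval, h1, h2]; rfl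
  | prec cf cg h1 h2 => simp only [lift, Code.eval, CodeO.eval, h1, h2]; rfl
  | rfind' cf h1 =>
    simp only [lift, Code.eval, CodeO.eval, h1]
    simp; rfl

theorem exists_total {f : ℕ → ℕ} (h : Computable f) :
    ∃ c : CodeO, ∀ O n, c.eval O n = Part.some (f n) := by
  obtain ⟨c, hc⟩ := Code.exists_code.1 (Partrec.nat_iff.1 h.partrec)
  exact ⟨lift c, fun O n => by rw [lift_eval, hc]; rfl⟩

theorem initSeg_succ (X : Cantor) (k : ℕ) : initSeg X (k + 1) = initSeg X k ++ [X k] := by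
  simp [initSeg, List.range_succ]

theorem exists_seg : ∃ c : CodeO, ∀ X a k,
    c.eval (oX X) (Nat.pair a k) = Part.some (Encodable.encode (initSeg X k)) := by
  have h1 : Computable fun m : ℕ => Encodable.encode
      (((Encodable.decode m.unpair.1 : Option (List Bool)).getD []) ++ [decide (m.unpair.2 = 1)]) := by
    fun_prop
  obtain ⟨d, hd⟩ := exists_total h1
  obtain ⟨z, hz⟩ := exists_total (Computable.const (Encodable.encode ([] : List Bool)))
  refine ⟨.prec z (.comp d (.pair (.comp .right .right) (.comp .oracle (.comp .left .right)))), ?_⟩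
  intro X a k
  induction k with
  | zero => rw [eval_prec_zero, hz]; rfl
  | succ k ih =>
    rw [eval_prec_succ, ih, Part.bind_some]
    simp only [eval_comp, eval_pair, eval_left, eval_right, eval_oracle, Part.bind_some, Nat.unpair_pair,
      Part.map_some, hd, Encodable.encodek, Option.getD_some]
    rw [initSeg_succ]
    congr 4
    unfold oX; cases X k <;> simp

theorem exists_machine {g : List Bool → ℕ → Option ℕ}
    (hg : Computable fun p : List Bool × ℕ => g p.1 p.2) :
    ∃ c : CodeO, ∀ X n, ((c.eval (oX X) n).Dom ↔ ∃ k, (g (initSeg X k) n).isSome = true) ∧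
      ∀ v ∈ c.eval (oX X) n, ∃ k, g (initSeg X k) n = some v := by
  obtain ⟨seg, hseg⟩ := exists_seg
  have h1 : Computable fun m : ℕ =>
      bif (g ((Encodable.decode m.unpair.1 : Option (List Bool)).getD []) m.unpair.2).isSome then 0
      else 1 := by fun_prop
  have h2 : Computable fun m : ℕ =>
      (g ((Encodable.decode m.unpair.1 : Option (List Bool)).getD []) m.unpair.2).getD 0 := by
    fun_prop
  obtain ⟨F, hF⟩ := exists_total h1
  obtain ⟨G, hG⟩ := exists_total h2
  have hF' : ∀ X n k, (CodeO.comp F (.pair seg .left)).eval (oX X) (Nat.pair n k) =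
      Part.some (bif (g (initSeg X k) n).isSome then 0 else 1) := by
    intro X n k
    simp only [eval_comp, eval_pair, eval_left, hseg, Part.bind_some, Nat.unpair_pair,
      Part.map_some, hF, Encodable.encodek, Option.getD_some]
  have hG' : ∀ X n k, (CodeO.comp G (.pair seg .left)).eval (oX X) (Nat.pair n k) =
      Part.some ((g (initSeg X k) n).getD 0) := by
    intro X n k
    simp only [eval_comp, eval_pair, eval_left, hseg, Part.bind_some, Nat.unpair_pair,
      Part.map_some, hG, Encodable.encodek, Option.getD_some]
  generalize CodeO.comp F (.pair seg .left) = cF at hF'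
  generalize CodeO.comp G (.pair seg .left) = cG at hG'
  have hr : ∀ X n k, k ∈ (CodeO.rfind' cF).eval (oX X) (Nat.pair n 0) ↔
      (g (initSeg X k) n).isSome ∧ ∀ j < k, ¬ (g (initSeg X j) n).isSome := by
    intro X n k
    rw [← evalP_coe, mem_rfindP]
    simp only [evalP_coe, hF', Part.mem_some_iff, Nat.add_zero]
    constructor
    · rintro ⟨_, rfl, h, h'⟩
      refine ⟨?_, fun j hj hh => ?_⟩
      · by_contra hh
        rw [Bool.not_eq_true] at hh
        rw [hh] at h; simp at h
      · obtain ⟨w, hw, hw'⟩ := h' j hj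
        rw [hh] at hw; exact hw' hw
    · rintro ⟨h, h'⟩
      refine ⟨k, rfl, by simp [h], fun j hj => ⟨1, ?_, by simp⟩⟩
      have := h' j hj
      simp only [Bool.not_eq_true] at this
      simp [this]
  refine ⟨.comp cG (.pair (.pair .left .right) (.comp (.rfind' cF) (.pair (.pair .left .right) .zero))),
    fun X n => ?_⟩
  have hev : ∀ v, v ∈ (CodeO.comp cG (.pair (.pair .left .right)
      (.comp (.rfind' cF) (.pair (.pair .left .right) .zero)))).eval (oX X) n ↔
      ∃ k, k ∈ (CodeO.rfind' cF).eval (oX X) (Nat.pair n 0) ∧ v = (g (initSeg X k) n).getD 0 := by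
    intro v
    simp only [eval_comp, eval_pair, eval_left, eval_right, eval_zero, Part.bind_some,
      Part.map_some, Nat.pair_unpair]
    rw [Part.mem_bind_iff]
    constructor
    · rintro ⟨a, ha, hv⟩
      rw [Part.mem_map_iff] at ha
      obtain ⟨k, hk, rfl⟩ := ha
      rw [hG', Part.mem_some_iff] at hv
      exact ⟨k, hk, hv⟩
    · rintro ⟨k, hk, hv⟩
      exact ⟨Nat.pair n k, Part.mem_map _ hk, by rw [hG', hv]; exact Part.mem_some _⟩
  constructor
  · rw [Part.dom_iff_mem]
    constructor
    · rintro ⟨v, hv⟩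
      obtain ⟨k, hk, _⟩ := (hev v).1 hv
      exact ⟨k, ((hr X n k).1 hk).1⟩
    · intro h
      classical
      exact ⟨_, (hev _).2 ⟨Nat.find h, (hr X n _).2 ⟨Nat.find_spec h, fun j hj => Nat.find_min h hj⟩, rfl⟩⟩
  · intro v hv
    obtain ⟨k, hk, hv⟩ := (hev v).1 hv
    refine ⟨k, ?_⟩
    have := ((hr X n k).1 hk).1
    rw [hv]
    cases h : g (initSeg X k) n with
    | none => simp [h] at this
    | some w => rfl

/-! ### The halting problem -/

/-- The characteristic sequence of the halting problem. -/
noncomputable def X' : Cantor := fun e => decide (iterJump 1 e = 1)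

theorem iterJump_one : iterJump 1 = oX X' := by
  funext e
  unfold oX X'
  have : iterJump 1 e = 1 ∨ iterJump 1 e = 0 := by
    unfold iterJump jump; split_ifs <;> simp
  rcases this with h | h <;> simp [h]

theorem oX_false : (fun _ => 0 : ℕ → ℕ) = oX (fun _ => false) := rfl

open Classical in
theorem X'_iff (c : CodeO) :
    X' c.encode = true ↔ (c.eval (oX fun _ => false) c.encode).Dom := by
  unfold X' iterJump jump
  rw [decide_eq_true_iff]
  change (if ∃ d : CodeO, d.encode = c.encode ∧ (d.eval (oX fun _ => false) c.encode).Dom then 1 else 0) = 1 ↔ _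
  split_ifs with h
  · simp only [true_iff]
    obtain ⟨d, hd, h⟩ := h
    rwa [encode_inj _ _ hd] at h
  · simp only [zero_ne_one, false_iff]
    exact fun hdom => h ⟨c, rfl, hdom⟩

/-- Step-bounded halting problem. -/
noncomputable def HT (e t : ℕ) : Bool := (evalS e (List.replicate t false) e).isSome

theorem initSeg_false (t : ℕ) : initSeg (fun _ => false) t = List.replicate t false := by
  simp [initSeg]

theorem X'_HT (e : ℕ) : X' e = true ↔ ∃ t, HT e t = true := by
  obtain ⟨c, rfl⟩ := encode_surj e
  rw [X'_iff, Part.dom_iff_mem]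
  constructor
  · rintro ⟨v, hv⟩
    obtain ⟨k, hk⟩ := evalS_iff.1 hv
    refine ⟨k, ?_⟩
    rw [HT, ← initSeg_false, hk]; rfl
  · rintro ⟨t, ht⟩
    rw [HT, ← initSeg_false, Option.isSome_iff_exists] at ht
    obtain ⟨v, hv⟩ := ht
    exact ⟨v, evalS_iff.2 ⟨t, hv⟩⟩

@[fun_prop] theorem cp_HT {α} [Primcodable α] {e t : α → ℕ} (he : Computable e) (ht : Computable t) :
    Computable fun x => HT (e x) (t x) := by
  unfold HT; fun_prop

section
variable {α β : Type*} [Primcodable α] [Primcodable β]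

/-- `p` is c.e. relative to the halting problem. -/
def CeX (p : α → Prop) : Prop :=
  ∃ P : List Bool → α → Bool, (Computable fun z : List Bool × α => P z.1 z.2) ∧
    ∀ x, p x ↔ ∃ k, P (initSeg X' k) x = true

/-- `p` is `Σ₂`. -/
def Sig2 (p : α → Prop) : Prop :=
  ∃ R : α → ℕ → ℕ → Bool, (Computable fun z : α × ℕ × ℕ => R z.1 z.2.1 z.2.2) ∧
    ∀ x, p x ↔ ∃ a, ∀ b, R x a b = true

theorem CeX.mono {p : α → Prop} (h : CeX p) :
    ∃ P : List Bool → α → Bool, (Computable fun z : List Bool × α => P z.1 z.2) ∧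
    (∀ x, p x ↔ ∃ k, P (initSeg X' k) x = true) ∧
    ∀ x k l, k ≤ l → P (initSeg X' k) x = true → P (initSeg X' l) x = true := by
  obtain ⟨P, hP, hp⟩ := h
  have key : ∀ x k, bEx ((initSeg X' k).length + 1) (fun i => P ((initSeg X' k).take i) x) = true ↔
      ∃ i ≤ k, P (initSeg X' i) x = true := by
    intro x k
    rw [bEx_iff, initSeg_length]
    constructor
    · rintro ⟨i, hi, h⟩
      rw [initSeg_take _ (by omega)] at h
      exact ⟨i, by omega, h⟩
    · rintro ⟨i, hi, h⟩
      exact ⟨i, by omega, by rwa [initSeg_take _ hi]⟩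
  refine ⟨fun τ x => bEx (τ.length + 1) (fun i => P (τ.take i) x), by fun_prop, fun x => ?_,
    fun x k l hkl => ?_⟩
  · rw [hp]
    simp only [key]
    exact ⟨fun ⟨k, hk⟩ => ⟨k, k, le_rfl, hk⟩, fun ⟨_, i, _, h⟩ => ⟨i, h⟩⟩
  · simp only [key]
    exact fun ⟨i, hi, h⟩ => ⟨i, hi.trans hkl, h⟩

theorem CeX.precomp {p : β → Prop} (h : CeX p) {f : α → β} (hf : Computable f) :
    CeX fun x => p (f x) := by
  obtain ⟨P, hP, hp⟩ := h
  exact ⟨fun τ x => P τ (f x), by fun_prop, fun x => hp (f x)⟩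

theorem Sig2.precomp {p : β → Prop} (h : Sig2 p) {f : α → β} (hf : Computable f) :
    Sig2 fun x => p (f x) := by
  obtain ⟨P, hP, hp⟩ := h
  exact ⟨fun τ x => P (f τ) x, by fun_prop, fun x => hp (f x)⟩

theorem ceX_of_ceIn {S : Set ℕ} (h : CeIn (iterJump 1) S) : CeX fun m => m ∈ S := by
  obtain ⟨c, rfl⟩ := h
  refine ⟨fun τ m => (evalS c.encode τ m).isSome, by fun_prop, fun m => ?_⟩
  rw [iterJump_one]
  change (c.eval (oX X') m).Dom ↔ _
  rw [Part.dom_iff_mem]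
  simp only [evalS_iff, Option.isSome_iff_exists]
  exact exists_comm

theorem ceIn_of_ceX {p : ℕ → Prop} (h : CeX p) : CeIn (iterJump 1) {m | p m} := by
  obtain ⟨P, hP, hp⟩ := h
  obtain ⟨c, hc⟩ := exists_machine (g := fun τ m => bif P τ m then some 0 else none) (by fun_prop)
  refine ⟨c, ?_⟩
  ext m
  rw [iterJump_one]
  change p m ↔ (c.eval (oX X') m).Dom
  rw [(hc X' m).1, hp]
  refine exists_congr fun k => ?_
  cases P (initSeg X' k) m <;> simp

theorem rightCe_iff {r : ℝ} : RightCeIn (iterJump 1) r ↔ CeX fun q : ℚ => r < q := by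
  constructor
  · intro h
    have := (ceX_of_ceIn h).precomp (f := fun q : ℚ => Encodable.encode q) (by fun_prop)
    obtain ⟨P, hP, hp⟩ := this
    refine ⟨P, hP, fun q => ?_⟩
    rw [← hp]
    constructor
    · exact fun h => ⟨q, rfl, h⟩
    · rintro ⟨q', h, h'⟩; rwa [Encodable.encode_injective h] at h'
  · rintro ⟨P, hP, hp⟩
    refine ceIn_of_ceX (p := fun m => ∃ q : ℚ, Encodable.encode q = m ∧ r < q)
      ⟨fun τ m => (Encodable.decode m : Option ℚ).elim false (fun q => P τ q), by fun_prop, fun m => ?_⟩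
    constructor
    · rintro ⟨q, rfl, h⟩
      obtain ⟨k, hk⟩ := (hp q).1 h
      exact ⟨k, by simpa using hk⟩
    · rintro ⟨k, hk⟩
      cases hd : (Encodable.decode m : Option ℚ) with
      | none => simp [hd] at hk
      | some q => exact ⟨q, rat_decode_mem hd, (hp q).2 ⟨k, by simpa [hd] using hk⟩⟩

theorem eq_initSeg {X : Cantor} {τ : List Bool} (h : ∀ i < τ.length, (τ[i]?).getD false = X i) :
    τ = initSeg X τ.length := by
  apply List.ext_getElem?
  intro i
  rw [initSeg_get]
  split_ifs with hi
  · have := h i hi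
    rw [List.getElem?_eq_getElem hi] at this ⊢
    rw [← this]; rfl
  · exact List.getElem?_eq_none (by omega)

theorem CeX.sig2 {p : α → Prop} (h : CeX p) : Sig2 p := by
  obtain ⟨P, hP, hp⟩ := h
  let S : ℕ → List Bool := fun a => (Encodable.decode a.unpair.1 : Option (List Bool)).getD []
  have hS : Computable S := by unfold S; fun_prop
  have hbx : Computable fun z : ℕ × ℕ => bEx z.2 (fun t => HT z.1 t) := by fun_prop
  have hbx' : Computable fun z : (α × ℕ × ℕ) × ℕ =>
      bif ((S z.1.2.1)[z.2]?).getD false then bEx z.1.2.1.unpair.2 (fun t => HT z.2 t)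
      else !(HT z.2 z.1.2.2) := by
    refine cp_cond (by fun_prop) ?_ (by fun_prop)
    exact hbx.comp (f := fun z : ℕ × ℕ => bEx z.2 (fun t => HT z.1 t))
      (g := fun z : (α × ℕ × ℕ) × ℕ => (z.2, z.1.2.1.unpair.2)) (by fun_prop)
  refine ⟨fun x a b => P (S a) x && bAll (S a).length (fun i =>
    bif ((S a)[i]?).getD false then bEx a.unpair.2 (fun t => HT i t) else !(HT i b)), ?_, fun x => ?_⟩
  · refine cp_and (by fun_prop) ?_
    exact cp_bAll (n := fun z : α × ℕ × ℕ => (S z.2.1).length) (by fun_prop) hbx'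
  · rw [hp]
    simp only [Bool.and_eq_true, bAll_iff]
    constructor
    · rintro ⟨k, hk⟩
      have hT : ∀ k, ∃ T, ∀ i < k, X' i = true → ∃ t < T, HT i t = true := by
        intro k
        induction k with
        | zero => exact ⟨0, fun i hi => absurd hi (Nat.not_lt_zero _)⟩
        | succ k ih =>
          obtain ⟨T, hT⟩ := ih
          by_cases hX : X' k = true
          · obtain ⟨t, ht⟩ := (X'_HT k).1 hX
            refine ⟨T + t + 1, fun i hi hXi => ?_⟩
            rcases Nat.lt_succ_iff_lt_or_eq.1 hi with h1 | rfl
            · obtain ⟨t', h2, h3⟩ := hT i h1 hXi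
              exact ⟨t', by omega, h3⟩
            · exact ⟨t, by omega, ht⟩
          · refine ⟨T, fun i hi hXi => ?_⟩
            rcases Nat.lt_succ_iff_lt_or_eq.1 hi with h1 | rfl
            · exact hT i h1 hXi
            · exact absurd hXi hX
      obtain ⟨T, hT⟩ := hT k
      have hSa : S (Nat.pair (Encodable.encode (initSeg X' k)) T) = initSeg X' k := by simp [S]
      refine ⟨Nat.pair (Encodable.encode (initSeg X' k)) T, fun b => ?_⟩
      rw [hSa, initSeg_length]
      refine ⟨hk, fun i hi => ?_⟩
      rw [initSeg_get, if_pos hi, Option.getD_some, Nat.unpair_pair]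
      cases hX : X' i with
      | true => exact bEx_iff.2 (hT i hi hX)
      | false =>
        cases hH : HT i b with
        | false => rfl
        | true => rw [(X'_HT i).2 ⟨b, hH⟩] at hX; cases hX
    · rintro ⟨a, ha⟩
      have : S a = initSeg X' (S a).length := by
        refine eq_initSeg fun i hi => ?_
        have h1 := fun b => (ha b).2 i hi
        cases hτ : ((S a)[i]?).getD false with
        | true =>
          have h2 := h1 0
          rw [hτ, cond_true, bEx_iff] at h2
          obtain ⟨t, _, ht⟩ := h2
          exact ((X'_HT i).2 ⟨t, ht⟩).symm
        | false =>
          cases hX : X' i with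
          | false => rfl
          | true =>
            obtain ⟨b, hb⟩ := (X'_HT i).1 hX
            have h2 := h1 b
            rw [hτ, hb] at h2; cases h2
      exact ⟨_, this ▸ (ha 0).1⟩

/-- Constant codes. -/
def constC : ℕ → CodeO
  | 0 => .zero
  | n + 1 => .comp .succ (constC n)

theorem constC_eval (O : ℕ → ℕ) (n m : ℕ) : (constC n).eval O m = Part.some n := by
  induction n with
  | zero => rfl
  | succ n ih => rw [constC, eval_comp, ih, Part.bind_some, eval_succ]

theorem cp_compEnc {f g : α → ℕ} (hf : Computable f) (hg : Computable g) :
    Computable fun x => 2 * (2 * Nat.pair (f x) (g x) + 1) + 5 :=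
  cp_nat_add (cp_nat_mul (Computable.const 2) (cp_nat_add (cp_nat_mul (Computable.const 2)
    (cp_pair hf hg)) (Computable.const 1))) (Computable.const 5)

theorem constC_encode : Computable fun n => (constC n).encode := by
  have : Computable fun n : ℕ => Nat.rec (motive := fun _ => ℕ) 0
    (fun _ r => 2 * (2 * Nat.pair 1 r + 1) + 5) n := by
    refine cp_nat_rec Computable.id (Computable.const 0) ?_
    exact cp_compEnc (Computable.const 1) (by fun_prop)
  refine this.of_eq fun n => ?_
  induction n with
  | zero => rfl
  | succ n ih => simp only [ih, constC, CodeO.encode]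

theorem Sig2.ceX {p : α → Prop} (h : Sig2 p) : CeX p := by
  obtain ⟨R, hR, hp⟩ := h
  obtain ⟨c, hc⟩ := exists_machine (g := fun τ m =>
    (Encodable.decode m.unpair.1 : Option α).bind fun x =>
      bif R x m.unpair.2 τ.length then none else some 0) (by fun_prop)
  have hc' : ∀ x a, X' (CodeO.comp c (constC (Nat.pair (Encodable.encode x) a))).encode = true ↔
      ∃ b, R x a b = false := by
    intro x a
    rw [X'_iff, eval_comp, constC_eval, Part.bind_some, (hc _ _).1]
    refine exists_congr fun k => ?_
    rw [initSeg_length]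
    simp only [Nat.unpair_pair, Encodable.encodek, Option.bind_some]
    cases R x a k <;> simp
  obtain ⟨e, he, hc'⟩ : ∃ e : α → ℕ → ℕ, (Computable fun z : α × ℕ => e z.1 z.2) ∧
      ∀ x a, X' (e x a) = true ↔ ∃ b, R x a b = false := by
    refine ⟨_, ?_, hc'⟩
    simp only [CodeO.encode]
    have h1 := constC_encode
    have h2 : Computable fun z : α × ℕ => (constC (Nat.pair (Encodable.encode z.1) z.2)).encode :=
      h1.comp (f := fun n => (constC n).encode)
        (g := fun z : α × ℕ => Nat.pair (Encodable.encode z.1) z.2) (by fun_prop)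
    exact cp_compEnc (Computable.const _) h2
  have hb : Computable fun z : List Bool × α =>
      bEx z.1.length (fun a => decide ((z.1)[e z.2 a]? = some false)) := by
    refine cp_bEx (by fun_prop) ?_
    exact cp_eq (f := fun y : (List Bool × α) × ℕ => (y.1.1)[e y.1.2 y.2]?) (by fun_prop) (by fun_prop)
  refine ⟨fun τ x => bEx τ.length (fun a => decide (τ[e x a]? = some false)), hb, fun x => ?_⟩
  rw [hp]
  simp only [bEx_iff, initSeg_length, decide_eq_true_eq, initSeg_get]
  have key : ∀ a, (∀ b, R x a b = true) ↔ X' (e x a) = false := by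
    intro a
    rw [← Bool.not_eq_true, hc']
    simp
  simp only [key]
  constructor
  · rintro ⟨a, ha⟩
    refine ⟨a + e x a + 1, a, by omega, ?_⟩
    rw [if_pos (by omega), ha]
  · rintro ⟨k, a, _, h⟩
    split_ifs at h with hlt
    exact ⟨a, Option.some.inj h⟩

end

end RandProb

namespace RandProb

set_option linter.unusedSectionVars false
section
variable {α β σ : Type*} [Primcodable α] [Primcodable β] [Primcodable σ]

/-! ### Recursions along the halting problem -/

/-- Run a recursion along a string. -/
def run (init : α → σ) (step : α → List Bool → σ → σ) (m : α) (τ : List Bool) : σ :=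
  Nat.rec (motive := fun _ => σ) (init m) (fun s st => step m (τ.take s) st) τ.length

theorem cp_run {init : α → σ} {step : α → List Bool → σ → σ} (h1 : Computable init)
    (h2 : Computable fun z : α × List Bool × σ => step z.1 z.2.1 z.2.2) :
    Computable fun z : α × List Bool => run init step z.1 z.2 := by
  unfold run
  fun_prop

theorem run_zero (init : α → σ) (step : α → List Bool → σ → σ) (m : α) (X : Cantor) :
    run init step m (initSeg X 0) = init m := rfl

theorem run_succ (init : α → σ) (step : α → List Bool → σ → σ) (m : α) (X : Cantor) (k : ℕ) :
    run init step m (initSeg X (k + 1)) = step m (initSeg X k) (run init step m (initSeg X k)) := by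
  have key : ∀ k j, j ≤ k → Nat.rec (motive := fun _ => σ) (init m)
      (fun s st => step m ((initSeg X k).take s) st) j =
      Nat.rec (motive := fun _ => σ) (init m) (fun s st => step m (initSeg X s) st) j := by
    intro k j
    induction j with
    | zero => intro _; rfl
    | succ j ih =>
      intro hj
      simp only [ih (by omega), initSeg_take X (show j ≤ k by omega)]
  unfold run
  rw [initSeg_length, initSeg_length, key k k le_rfl]
  exact key (k + 1) (k + 1) le_rfl

theorem exists_appr {γ : α → ℝ} (h : CeX fun z : α × ℚ => γ z.1 < z.2) (h2 : ∀ m, γ m < 2) :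
    ∃ A : α → List Bool → ℚ, (Computable fun z : α × List Bool => A z.1 z.2) ∧ ∀ m,
      (Antitone fun k => A m (initSeg X' k)) ∧ (∀ k, γ m < A m (initSeg X' k)) ∧
      (∀ k, A m (initSeg X' k) ≤ 2) ∧ A m (initSeg X' 0) = 2 ∧
      ∀ r : ℝ, γ m < r → ∃ k, (A m (initSeg X' k) : ℝ) < r := by
  obtain ⟨P, hP, hp, hmono⟩ := h.mono
  let step : α → List Bool → ℚ → ℚ := fun m τ cur =>
    bif P τ (m, dq τ.length.unpair.1) then min cur (dq τ.length.unpair.1) else cur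
  have hstep : Computable fun z : α × List Bool × ℚ => step z.1 z.2.1 z.2.2 := by
    unfold step; fun_prop
  refine ⟨run (fun _ => 2) step, cp_run (Computable.const 2) hstep, fun m => ?_⟩
  have hs : ∀ k, run (fun _ => 2) step m (initSeg X' (k + 1)) ≤ run (fun _ => 2) step m (initSeg X' k) := by
    intro k
    rw [run_succ]
    unfold step
    cases P (initSeg X' k) (m, dq (initSeg X' k).length.unpair.1)
    · exact le_rfl
    · exact min_le_left _ _
  have hanti : Antitone fun k => run (fun _ => 2) step m (initSeg X' k) := antitone_nat_of_succ_le hs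
  refine ⟨hanti, ?_, fun k => ?_, rfl, ?_⟩
  · intro k
    induction k with
    | zero => rw [run_zero]; exact_mod_cast h2 m
    | succ k ih =>
      rw [run_succ]
      generalize run (fun _ => 2) step m (initSeg X' k) = cur at ih ⊢
      unfold step
      cases hPk : P (initSeg X' k) (m, dq (initSeg X' k).length.unpair.1)
      · exact ih
      · have := (hp (m, dq (initSeg X' k).length.unpair.1)).2 ⟨k, hPk⟩
        simp only [cond_true]
        rcases min_choice cur (dq (initSeg X' k).length.unpair.1) with h | h <;> rw [h]
        · exact ih
        · exact this
  · exact hanti (Nat.zero_le k)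
  · intro r hr
    obtain ⟨q, hq1, hq2⟩ := exists_rat_btwn hr
    obtain ⟨k, hk⟩ := (hp (m, q)).1 hq1
    refine ⟨Nat.pair (Encodable.encode q) k + 1, lt_of_le_of_lt ?_ hq2⟩
    rw [run_succ]
    generalize run (fun _ => 2) step m _ = cur
    have h3 := hmono _ _ _ (Nat.right_le_pair (Encodable.encode q) k) hk
    unfold step
    rw [initSeg_length, Nat.unpair_pair, dq_encode, h3]
    simp only [cond_true]
    exact_mod_cast min_le_right _ _

theorem ceX_seq {B : α → List Bool → ℚ} (hB : Computable fun z : α × List Bool => B z.1 z.2) :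
    CeX fun z : α × ℚ => ∃ k, B z.1 (initSeg X' k) < z.2 :=
  ⟨fun τ z => decide (B z.1 τ < z.2), by fun_prop, fun z => by simp⟩

end

end RandProb


namespace RandProb

theorem digits_measurable : Measurable digits := by
  rw [measurable_pi_iff]
  intro n
  have h1 : Measurable fun x : ℝ => ⌊x * 2 ^ (n + 1)⌋ := Int.measurable_floor.comp (measurable_id.mul_const _)
  have h2 : Measurable fun z : ℤ => (decide (z % 2 = 1) : Bool) := measurable_from_top
  exact h2.comp h1

instance mu_prob : IsProbabilityMeasure mu := by
  constructor
  rw [mu, Measure.map_apply digits_measurable MeasurableSet.univ]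
  simp

theorem mu_apply {S : Set Cantor} (hS : MeasurableSet S) :
    mu S = volume {x : ℝ | x ∈ Set.Ico (0 : ℝ) 1 ∧ digits x ∈ S} := by
  rw [mu, Measure.map_apply digits_measurable hS, Measure.restrict_apply (digits_measurable hS)]
  congr 1
  ext x
  exact and_comm

theorem meas_bit (k : ℕ) (b : Bool) : MeasurableSet {X : Cantor | X k = b} := by
  have : Measurable fun X : Cantor => X k := measurable_pi_apply k
  exact this (MeasurableSet.singleton b)

theorem prepend_nil (X : Cantor) : prepend [] X = X := by
  funext n; simp [prepend]

theorem meas_seg (k : ℕ) : ∀ P : List Bool → Prop, MeasurableSet {X : Cantor | P (initSeg X k)} := by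
  induction k with
  | zero => intro P; simp [initSeg]
  | succ k ih =>
    intro P
    have : {X : Cantor | P (initSeg X (k + 1))} =
        ({X : Cantor | X k = true} ∩ {X | P (initSeg X k ++ [true])}) ∪
        ({X : Cantor | X k = false} ∩ {X | P (initSeg X k ++ [false])}) := by
      ext X
      change P (initSeg X (k + 1)) ↔ (X k = true ∧ P (initSeg X k ++ [true])) ∨ (X k = false ∧ P (initSeg X k ++ [false]))
      rw [initSeg_succ]
      cases X k <;> simp
    rw [this]
    have hm : ∀ b : Bool, MeasurableSet {X : Cantor | X k = b} := meas_bit k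
    exact ((hm true).inter (ih fun l => P (l ++ [true]))).union ((hm false).inter (ih fun l => P (l ++ [false])))

/-- The `Π⁰₂`-type class determined by `Q`. -/
def Cls (Q : List Bool → ℕ → Bool) : Set Cantor := {X | ∀ n, ∃ k, Q (initSeg X k) n = true}

theorem meas_ex (Q : List Bool → Bool) : MeasurableSet {X : Cantor | ∃ k, Q (initSeg X k) = true} := by
  have : {X : Cantor | ∃ k, Q (initSeg X k) = true} = ⋃ k, {X : Cantor | Q (initSeg X k) = true} := by
    ext X; simp
  rw [this]
  exact MeasurableSet.iUnion fun k => meas_seg k fun l => Q l = true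

theorem meas_cls (Q : List Bool → ℕ → Bool) : MeasurableSet (Cls Q) := by
  have : Cls Q = ⋂ n, {X : Cantor | ∃ k, Q (initSeg X k) n = true} := by
    ext X; simp [Cls]
  rw [this]
  exact MeasurableSet.iInter fun n => meas_ex fun l => Q l n

/-- Numerical value of a string. -/
def val (τ : List Bool) : ℕ := τ.foldl (fun a b => 2 * a + cond b 1 0) 0

theorem val_append (τ : List Bool) (b : Bool) : val (τ ++ [b]) = 2 * val τ + cond b 1 0 := by
  simp [val]

theorem val_comp : Computable val := by
  apply Primrec.to_comp
  have := @Primrec.list_foldl (List Bool) Bool ℕ _ _ _ (fun τ => τ) (fun _ => 0)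
    (fun _ z => 2 * z.1 + cond z.2 1 0) Primrec.id (Primrec.const 0)
    (Primrec.nat_add.comp (Primrec.nat_mul.comp (Primrec.const 2) (Primrec.fst.comp Primrec.snd))
      (Primrec.cond (Primrec.snd.comp Primrec.snd) (Primrec.const 1) (Primrec.const 0)))
  exact this

@[fun_prop] theorem cp_val {α} [Primcodable α] {f : α → List Bool} (h : Computable f) :
    Computable fun x => val (f x) := val_comp.comp h

theorem digits_eq {x : ℝ} (h0 : 0 ≤ x) (n : ℕ) : digits x n = decide (⌊x * 2 ^ (n + 1)⌋₊ % 2 = 1) := by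
  have : (⌊x * 2 ^ (n + 1)⌋ : ℤ) = (⌊x * 2 ^ (n + 1)⌋₊ : ℕ) := (Int.natCast_floor_eq_floor (by positivity)).symm
  unfold digits
  rw [this]
  congr 1
  simp only [eq_iff_iff]
  omega

theorem floor_half {y : ℝ} : ⌊y * 2⌋₊ / 2 = ⌊y⌋₊ := by
  have := Nat.floor_div_natCast (y * 2) 2
  rw [← this]; simp

theorem val_digits {x : ℝ} (h0 : 0 ≤ x) (h1 : x < 1) (k : ℕ) : val (initSeg (digits x) k) = ⌊x * 2 ^ k⌋₊ := by
  induction k with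
  | zero => simp [initSeg, val, Nat.floor_eq_zero.2 h1]
  | succ k ih =>
    rw [initSeg_succ, val_append, ih, digits_eq h0]
    have := floor_half (y := x * 2 ^ k)
    rw [mul_assoc, ← pow_succ] at this
    by_cases h : ⌊x * 2 ^ (k + 1)⌋₊ % 2 = 1
    · simp [h]; omega
    · simp [h]; omega

/-- String of length `s` with value `j`. -/
def strOf (s j : ℕ) : List Bool := (List.range s).map fun i => decide (j / 2 ^ (s - 1 - i) % 2 = 1)

@[fun_prop] theorem cp_strOf {α} [Primcodable α] {f g : α → ℕ} (hf : Computable f) (hg : Computable g) :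
    Computable fun x => strOf (f x) (g x) := by
  unfold strOf
  apply cp_map_range hf
  have : Computable fun z : α × ℕ => g z.1 / 2 ^ (f z.1 - 1 - z.2) % 2 := by fun_prop
  exact cp_eq this (Computable.const 1)

theorem seg_strOf {x : ℝ} (h0 : 0 ≤ x) (s : ℕ) : initSeg (digits x) s = strOf s ⌊x * 2 ^ s⌋₊ := by
  unfold initSeg strOf
  apply List.map_congr_left
  intro i hi
  have hi : i < s := List.mem_range.1 hi
  rw [digits_eq h0]
  have h := Nat.floor_div_natCast (x * 2 ^ s) (2 ^ (s - 1 - i))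
  have e : x * 2 ^ s / ((2 ^ (s - 1 - i) : ℕ) : ℝ) = x * 2 ^ (i + 1) := by
    push_cast
    rw [div_eq_iff (by positivity), mul_assoc, ← pow_add]
    congr 2; omega
  rw [← h, e]

theorem cell_iff {x : ℝ} (h0 : 0 ≤ x) (s j : ℕ) : ⌊x * 2 ^ s⌋₊ = j ↔ x ∈ Set.Ico ((j : ℝ) / 2 ^ s) ((j + 1) / 2 ^ s) := by
  rw [Nat.floor_eq_iff (by positivity), Set.mem_Ico, div_le_iff₀ (by positivity), lt_div_iff₀ (by positivity)]

theorem vol_cells (s : ℕ) (f : ℕ → Bool) :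
    volume {x : ℝ | x ∈ Set.Ico (0 : ℝ) 1 ∧ f ⌊x * 2 ^ s⌋₊ = true} =
      ENNReal.ofReal (((bSum (2 ^ s) fun j => bif f j then 1 else 0 : ℕ) : ℝ) / 2 ^ s) := by
  have e : {x : ℝ | x ∈ Set.Ico (0 : ℝ) 1 ∧ f ⌊x * 2 ^ s⌋₊ = true} =
      ⋃ j ∈ (Finset.range (2 ^ s)).filter (fun j => f j = true), Set.Ico ((j : ℝ) / 2 ^ s) ((j + 1) / 2 ^ s) := by
    ext x
    simp only [Set.mem_iUnion, Finset.mem_filter, Finset.mem_range, exists_prop]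
    constructor
    · rintro ⟨⟨h0, h1⟩, h⟩
      refine ⟨⌊x * 2 ^ s⌋₊, ⟨?_, h⟩, (cell_iff h0 s _).1 rfl⟩
      rw [Nat.floor_lt (by positivity)]
      push_cast
      have : (0 : ℝ) < 2 ^ s := by positivity
      nlinarith
    · rintro ⟨j, ⟨hj, h⟩, hx⟩
      have h0 : 0 ≤ x := le_trans (by positivity) hx.1
      have h1 : x < 1 := by
        refine lt_of_lt_of_le hx.2 ?_
        rw [div_le_one (by positivity)]
        exact_mod_cast hj
      refine ⟨⟨h0, h1⟩, ?_⟩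
      rw [(cell_iff h0 s j).2 hx]; exact h
  rw [e, measure_biUnion_finset]
  · have : ∀ j : ℕ, volume (Set.Ico ((j : ℝ) / 2 ^ s) ((j + 1) / 2 ^ s)) = ENNReal.ofReal (1 / 2 ^ s) := by
      intro j
      rw [Real.volume_Ico]; congr 1; ring
    simp only [this, Finset.sum_const, nsmul_eq_mul]
    rw [bSum_eq, ← ENNReal.ofReal_natCast, ← ENNReal.ofReal_mul (by positivity)]
    congr 1
    rw [mul_one_div]
    congr 2
    rw [Finset.card_filter]
    apply Finset.sum_congr rfl
    intro j _
    cases f j <;> simp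
  · intro i _ j _ hij
    rw [Function.onFun, Set.disjoint_left]
    intro x hi hj
    have h0 : 0 ≤ x := le_trans (by positivity) hi.1
    exact hij (((cell_iff h0 s i).2 hi).symm.trans ((cell_iff h0 s j).2 hj))
  · intro j _; exact measurableSet_Ico

theorem mu_seg (s : ℕ) (P : List Bool → Bool) :
    muR {X | P (initSeg X s) = true} = ((bSum (2 ^ s) fun j => bif P (strOf s j) then 1 else 0 : ℕ) : ℝ) / 2 ^ s := by
  rw [muR, mu_apply (meas_seg s fun l => P l = true)]
  have : {x : ℝ | x ∈ Set.Ico (0 : ℝ) 1 ∧ digits x ∈ {X | P (initSeg X s) = true}} =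
      {x : ℝ | x ∈ Set.Ico (0 : ℝ) 1 ∧ (fun j => P (strOf s j)) ⌊x * 2 ^ s⌋₊ = true} := by
    ext x
    constructor
    · rintro ⟨h, h2⟩
      refine ⟨h, ?_⟩
      change P (initSeg (digits x) s) = true at h2
      rw [seg_strOf h.1] at h2; exact h2
    · rintro ⟨h, h2⟩
      refine ⟨h, ?_⟩
      change P (initSeg (digits x) s) = true
      rw [seg_strOf h.1]; exact h2
  rw [this, vol_cells s fun j => P (strOf s j), ENNReal.toReal_ofReal (by positivity)]

theorem prepend_bit_digits {y : ℝ} (h0 : 0 ≤ y) (h1 : y < 1) (b : Bool) :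
    digits (((cond b 1 0 : ℝ) + y) / 2) = prepend [b] (digits y) := by
  have hb : (0 : ℝ) ≤ cond b 1 0 := by cases b <;> simp
  funext n
  rw [digits_eq (by positivity)]
  cases n with
  | zero =>
    have : ((cond b 1 0 : ℝ) + y) / 2 * 2 ^ (0 + 1) = y + ((cond b 1 0 : ℕ) : ℝ) := by
      cases b <;> simp <;> ring
    rw [this, Nat.floor_add_natCast h0, Nat.floor_eq_zero.2 h1]
    cases b <;> simp [prepend]
  | succ n =>
    have : ((cond b 1 0 : ℝ) + y) / 2 * 2 ^ (n + 1 + 1) = y * 2 ^ (n + 1) + ((2 * (cond b 1 0 * 2 ^ n) : ℕ) : ℝ) := by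
      cases b <;> simp <;> ring
    rw [this, Nat.floor_add_natCast (by positivity)]
    have : prepend [b] (digits y) (n + 1) = digits y n := by simp [prepend]
    rw [this, digits_eq h0]
    congr 1
    simp only [eq_iff_iff]
    omega

theorem prepend_meas (ρ : List Bool) : Measurable (prepend ρ) := by
  rw [measurable_pi_iff]
  intro n
  unfold prepend
  by_cases h : n < ρ.length
  · simp only [h, if_true]; exact measurable_const
  · simp only [h, if_false]; exact measurable_pi_apply _

theorem muR_bit {S : Set Cantor} (hS : MeasurableSet S) (b : Bool) :
    muR {X | X 0 = b ∧ X ∈ S} = 1 / 2 * muR {Y | prepend [b] Y ∈ S} := by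
  have m1 : MeasurableSet {X : Cantor | X 0 = b ∧ X ∈ S} :=
    (meas_bit 0 b).inter hS
  have m2 : MeasurableSet {Y | prepend [b] Y ∈ S} := prepend_meas [b] hS
  rw [muR, muR, mu_apply m1, mu_apply m2]
  set T := {x : ℝ | x ∈ Set.Ico (0 : ℝ) 1 ∧ digits x ∈ {X | X 0 = b ∧ X ∈ S}}
  have e : {x : ℝ | x ∈ Set.Ico (0 : ℝ) 1 ∧ digits x ∈ {Y | prepend [b] Y ∈ S}} =
      (fun y : ℝ => (cond b 1 0 : ℝ) + y) ⁻¹' ((fun x : ℝ => (1 / 2) * x) ⁻¹' T) := by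
    ext y
    have hxy : (1 / 2) * ((cond b 1 0 : ℝ) + y) = ((cond b 1 0 : ℝ) + y) / 2 := by ring
    change (0 ≤ y ∧ y < 1) ∧ prepend [b] (digits y) ∈ S ↔
      ((0 ≤ (1 / 2) * ((cond b 1 0 : ℝ) + y) ∧ (1 / 2) * ((cond b 1 0 : ℝ) + y) < 1) ∧
        digits ((1 / 2) * ((cond b 1 0 : ℝ) + y)) 0 = b ∧ digits ((1 / 2) * ((cond b 1 0 : ℝ) + y)) ∈ S)
    rw [hxy]
    constructor
    · rintro ⟨⟨h0, h1⟩, h⟩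
      rw [prepend_bit_digits h0 h1]
      refine ⟨?_, by simp [prepend], h⟩
      cases b <;> simp <;> constructor <;> linarith
    · rintro ⟨⟨h0, h1⟩, h2, h⟩
      have : 0 ≤ y ∧ y < 1 := by
        rw [digits_eq h0] at h2
        have e1 : ((cond b 1 0 : ℝ) + y) / 2 * 2 ^ (0 + 1) = (cond b 1 0 : ℝ) + y := by ring
        rw [e1] at h2
        cases b
        · simp at h0 h1 h2 ⊢
          have h0 : 0 ≤ y := by linarith
          refine ⟨h0, ?_⟩
          by_contra hc
          have : ⌊y⌋₊ = 1 := by rw [Nat.floor_eq_iff h0]; constructor <;> push_cast <;> linarith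
          omega
        · simp at h0 h1 h2 ⊢
          refine ⟨?_, by linarith⟩
          by_contra hc
          have : ⌊1 + y⌋₊ = 0 := by rw [Nat.floor_eq_zero]; linarith
          omega
      rw [prepend_bit_digits this.1 this.2] at h
      exact ⟨this, h⟩
  rw [e, measure_preimage_add, Real.volume_preimage_mul_left (by norm_num), ENNReal.toReal_mul]
  norm_num
  ring

theorem prepend_cons (b : Bool) (ρ : List Bool) (X : Cantor) :
    prepend (b :: ρ) X = prepend [b] (prepend ρ X) := by
  funext n
  cases n with
  | zero => simp [prepend]
  | succ n => simp [prepend]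

theorem prepend_append (a b : List Bool) (X : Cantor) : prepend (a ++ b) X = prepend a (prepend b X) := by
  induction a with
  | nil => simp [prepend_nil]
  | cons c a ih => rw [List.cons_append, prepend_cons, ih, ← prepend_cons]

theorem initSeg_prepend_bit (b : Bool) (X : Cantor) (k : ℕ) :
    initSeg (prepend [b] X) (k + 1) = b :: initSeg X k := by
  unfold initSeg
  rw [List.range_succ_eq_map, List.map_cons, List.map_map]
  congr 1

theorem initSeg_prepend (ρ : List Bool) (X : Cantor) (k : ℕ) :
    initSeg (prepend ρ X) (ρ.length + k) = ρ ++ initSeg X k := by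
  induction ρ with
  | nil => simp [prepend_nil]
  | cons b ρ ih =>
    rw [prepend_cons, List.length_cons, show ρ.length + 1 + k = (ρ.length + k) + 1 by ring, initSeg_prepend_bit, ih]
    rfl

theorem extends_cons (b : Bool) (ρ : List Bool) (X : Cantor) :
    Extends X (b :: ρ) ↔ X 0 = b ∧ ∃ Y, X = prepend [b] Y ∧ Extends Y ρ := by
  constructor
  · intro h
    unfold Extends at h
    have e : X = prepend [X 0] fun n => X (n + 1) := by
      funext n; cases n <;> simp [prepend]
    rw [List.length_cons, e, initSeg_prepend_bit] at h
    have h' := List.cons.inj h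
    refine ⟨h'.1, fun n => X (n + 1), ?_, h'.2⟩
    rw [← h'.1]; exact e
  · rintro ⟨_, Y, rfl, h⟩
    unfold Extends at h ⊢
    rw [List.length_cons, initSeg_prepend_bit, h]

theorem prepend_bit_inj {b : Bool} {X Y : Cantor} (h : prepend [b] X = prepend [b] Y) : X = Y := by
  funext n
  have := congrFun h (n + 1)
  simpa [prepend] using this

theorem muR_cone (ρ : List Bool) : ∀ {S : Set Cantor}, MeasurableSet S →
    muR {X | Extends X ρ ∧ X ∈ S} = (1 / 2) ^ ρ.length * muR {Y | prepend ρ Y ∈ S} := by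
  induction ρ with
  | nil => intro S hS; simp [Extends, initSeg, prepend_nil]
  | cons b ρ ih =>
    intro S hS
    have m1 : MeasurableSet {X | Extends X (b :: ρ) ∧ X ∈ S} :=
      (meas_seg (b :: ρ).length fun l => l = b :: ρ).inter hS
    have e1 : {X | Extends X (b :: ρ) ∧ X ∈ S} = {X | X 0 = b ∧ X ∈ {X | Extends X (b :: ρ) ∧ X ∈ S}} := by
      ext X
      change _ ↔ X 0 = b ∧ Extends X (b :: ρ) ∧ X ∈ S
      constructor
      · intro h; exact ⟨((extends_cons _ _ _).1 h.1).1, h⟩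
      · intro h; exact h.2
    have e2 : {Y | prepend [b] Y ∈ {X | Extends X (b :: ρ) ∧ X ∈ S}} =
        {Y | Extends Y ρ ∧ Y ∈ {Z | prepend [b] Z ∈ S}} := by
      ext Y
      change Extends (prepend [b] Y) (b :: ρ) ∧ prepend [b] Y ∈ S ↔ Extends Y ρ ∧ prepend [b] Y ∈ S
      rw [extends_cons]
      constructor
      · rintro ⟨⟨_, Z, hZ, h⟩, h2⟩
        rw [prepend_bit_inj hZ]; rw [hZ] at h2; exact ⟨h, h2⟩
      · rintro ⟨h, h2⟩
        exact ⟨⟨by simp [prepend], Y, rfl, h⟩, h2⟩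
    rw [e1, muR_bit m1, e2, ih (S := {Z | prepend [b] Z ∈ S}) (prepend_meas [b] hS)]
    have e3 : {Y | prepend ρ Y ∈ {Z | prepend [b] Z ∈ S}} = {Y | prepend (b :: ρ) Y ∈ S} := by
      ext Y
      change prepend [b] (prepend ρ Y) ∈ S ↔ _
      rw [← prepend_cons]; rfl
    rw [e3, List.length_cons, pow_succ]; ring

theorem muR_split (ρ : List Bool) {S : Set Cantor} (hS : MeasurableSet S) :
    muR S = (1 / 2) ^ ρ.length * muR {Y | prepend ρ Y ∈ S} + muR {X | ¬ Extends X ρ ∧ X ∈ S} := by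
  rw [← muR_cone ρ hS]
  have := measureReal_inter_add_sdiff (μ := mu) (s := S) (meas_seg ρ.length fun l => l = ρ)
  unfold muR
  rw [← measureReal_def, ← measureReal_def, ← measureReal_def, ← this]
  congr 2 <;> (ext X; exact and_comm)

theorem muR_nonneg (S : Set Cantor) : 0 ≤ muR S := ENNReal.toReal_nonneg
theorem muR_le_one (S : Set Cantor) : muR S ≤ 1 := by
  unfold muR; exact measureReal_le_one
theorem muR_mono {S T : Set Cantor} (h : S ⊆ T) : muR S ≤ muR T := by
  unfold muR; exact measureReal_mono h

end RandProb


namespace RandProb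
section
variable {α : Type*} [Primcodable α]

theorem muR_interval {S : Set Cantor} (hS : MeasurableSet S) {a b : ℝ} (ha : 0 ≤ a) (hab : a ≤ b) (hb : b ≤ 1)
    (h1 : ∀ x : ℝ, 0 ≤ x → x < 1 → a ≤ x → x < b → digits x ∈ S)
    (h2 : ∀ x : ℝ, 0 ≤ x → x < 1 → digits x ∈ S → a ≤ x ∧ x ≤ b) : muR S = b - a := by
  rw [muR, mu_apply hS]
  have : volume {x : ℝ | x ∈ Set.Ico (0 : ℝ) 1 ∧ digits x ∈ S} = ENNReal.ofReal (b - a) := by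
    apply le_antisymm
    · rw [← Real.volume_Icc]
      apply measure_mono
      intro x hx
      exact h2 x hx.1.1 hx.1.2 hx.2
    · rw [← Real.volume_Ico]
      apply measure_mono
      intro x hx
      exact ⟨⟨ha.trans hx.1, lt_of_lt_of_le hx.2 hb⟩, h1 x (ha.trans hx.1) (lt_of_lt_of_le hx.2 hb) hx.1 hx.2⟩
  rw [this, ENNReal.toReal_ofReal (by linarith)]

/-- stage test -/
def stT (Q : α → List Bool → ℕ → Bool) (m : α) (n s : ℕ) (τ : List Bool) : Bool :=
  bAll (n + 1) fun n' => bEx (s + 1) fun k => Q m (τ.take k) n'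

theorem stT_iff {Q : α → List Bool → ℕ → Bool} {m : α} {n s : ℕ} {X : Cantor} :
    stT Q m n s (initSeg X s) = true ↔ ∀ n' ≤ n, ∃ k ≤ s, Q m (initSeg X k) n' = true := by
  unfold stT
  simp only [bAll_iff, bEx_iff, Nat.lt_succ_iff]
  refine forall₂_congr fun n' _ => exists_congr fun k => and_congr_right fun hk => ?_
  rw [initSeg_take X hk]

theorem cls_sig2 {Q : α → List Bool → ℕ → Bool}
    (hQ : Computable fun z : α × List Bool × ℕ => Q z.1 z.2.1 z.2.2) :
    Sig2 fun z : α × ℚ => muR (Cls (Q z.1)) < z.2 := by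
  have hT : Computable fun z : α × ℕ × ℕ × List Bool => stT Q z.1 z.2.1 z.2.2.1 z.2.2.2 := by
    unfold stT
    have : Computable fun z : ((α × ℕ × ℕ × List Bool) × ℕ) × ℕ => Q z.1.1.1 (z.1.1.2.2.2.take z.2) z.1.2 := by
      exact hQ.comp (f := fun p : α × List Bool × ℕ => Q p.1 p.2.1 p.2.2)
        (g := fun z : ((α × ℕ × ℕ × List Bool) × ℕ) × ℕ => (z.1.1.1, z.1.1.2.2.2.take z.2, z.1.2)) (by fun_prop)
    fun_prop
  let cnt : α → ℕ → ℕ → ℕ := fun m n s => bSum (2 ^ s) fun j => bif stT Q m n s (strOf s j) then 1 else 0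
  have hcnt : Computable fun z : α × ℕ × ℕ => cnt z.1 z.2.1 z.2.2 := by
    unfold cnt
    have : Computable fun z : (α × ℕ × ℕ) × ℕ => stT Q z.1.1 z.1.2.1 z.1.2.2 (strOf z.1.2.2 z.2) :=
      hT.comp (f := fun z : α × ℕ × ℕ × List Bool => stT Q z.1 z.2.1 z.2.2.1 z.2.2.2)
        (g := fun z : (α × ℕ × ℕ) × ℕ => (z.1.1, z.1.2.1, z.1.2.2, strOf z.1.2.2 z.2)) (by fun_prop)
    fun_prop
  have cnt_eq : ∀ m n s, muR {X | stT Q m n s (initSeg X s) = true} = (cnt m n s : ℝ) / 2 ^ s := fun m n s =>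
    mu_seg s (stT Q m n s)
  have hc2 : Computable fun z : (α × ℚ) × ℕ × ℕ => cnt z.1.1 z.2.1.unpair.1 z.2.2 :=
    hcnt.comp (f := fun z : α × ℕ × ℕ => cnt z.1 z.2.1 z.2.2)
      (g := fun z : (α × ℚ) × ℕ × ℕ => (z.1.1, z.2.1.unpair.1, z.2.2)) (by fun_prop)
  refine ⟨fun z a b => decide (dq a.unpair.2 < z.2) &&
    decide ((cnt z.1 a.unpair.1 b : ℚ) ≤ dq a.unpair.2 * 2 ^ b), ?_, ?_⟩
  · have h1 : Computable fun z : (α × ℚ) × ℕ × ℕ => dq z.2.1.unpair.2 * 2 ^ z.2.2 := by fun_prop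
    have h2 : Computable fun z : (α × ℚ) × ℕ × ℕ => ((cnt z.1.1 z.2.1.unpair.1 z.2.2 : ℕ) : ℚ) := by fun_prop
    have h3 : Computable fun z : (α × ℚ) × ℕ × ℕ => decide (dq z.2.1.unpair.2 < z.1.2) := by fun_prop
    exact cp_and h3 (cp_rat_le h2 h1)
  rintro ⟨m, q⟩
  simp only [Bool.and_eq_true, decide_eq_true_eq]
  let F : ℕ → Set Cantor := fun n => {X | ∀ n' ≤ n, ∃ k, Q m (initSeg X k) n' = true}
  have hFU : ∀ n, F n = ⋃ s, {X | stT Q m n s (initSeg X s) = true} := by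
    intro n
    ext X
    simp only [Set.mem_iUnion]
    change (∀ n' ≤ n, ∃ k, Q m (initSeg X k) n' = true) ↔ ∃ s, stT Q m n s (initSeg X s) = true
    simp only [stT_iff]
    constructor
    · intro h
      choose! k hk using h
      refine ⟨(Finset.range (n + 1)).sup k, fun n' hn' => ⟨k n', ?_, hk n' hn'⟩⟩
      exact Finset.le_sup (f := k) (Finset.mem_range.2 (by omega))
    · rintro ⟨s, h⟩ n' hn'
      obtain ⟨k, _, hk⟩ := h n' hn'
      exact ⟨k, hk⟩
  have hmonoE : ∀ n, Monotone fun s => {X | stT Q m n s (initSeg X s) = true} := by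
    intro n s t hst X hX
    change stT Q m n t (initSeg X t) = true
    rw [stT_iff]
    intro n' hn'
    obtain ⟨k, hk, h⟩ := stT_iff.1 hX n' hn'
    exact ⟨k, hk.trans hst, h⟩
  have hFm : ∀ n, MeasurableSet (F n) := fun n => by
    rw [hFU]; exact MeasurableSet.iUnion fun s => meas_seg s fun l => stT Q m n s l = true
  have hFanti : Antitone F := fun n n' h X hX k hk => hX k (hk.trans h)
  have hFI : Cls (Q m) = ⋂ n, F n := by
    ext X
    simp only [Set.mem_iInter]
    exact ⟨fun h n n' _ => h n', fun h n => h n n le_rfl⟩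
  constructor
  · intro h
    change muR (Cls (Q m)) < q at h
    have ht := tendsto_measure_iInter_atTop (μ := mu) (fun n => (hFm n).nullMeasurableSet) hFanti
      ⟨0, measure_ne_top _ _⟩
    rw [← hFI] at ht
    have ht2 := (ENNReal.tendsto_toReal (measure_ne_top mu (Cls (Q m)))).comp ht
    obtain ⟨n, hn⟩ := (ht2.eventually (gt_mem_nhds h)).exists
    obtain ⟨q', hq1, hq2⟩ := exists_rat_btwn hn
    refine ⟨Nat.pair n (Encodable.encode q'), fun s => ?_⟩
    simp only [Nat.unpair_pair, dq_encode]
    refine ⟨by exact_mod_cast hq2, ?_⟩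
    have h1 : (cnt m n s : ℝ) / 2 ^ s ≤ q' := by
      rw [← cnt_eq]
      refine le_trans (muR_mono ?_) hq1.le
      rw [hFU]
      exact Set.subset_iUnion (fun s => {X | stT Q m n s (initSeg X s) = true}) s
    rw [div_le_iff₀ (by positivity)] at h1
    exact_mod_cast h1
  · rintro ⟨a, h⟩
    change muR (Cls (Q m)) < q
    have h0 : (dq a.unpair.2 : ℝ) < q := by exact_mod_cast (h 0).1
    refine lt_of_le_of_lt ?_ h0
    refine le_trans (muR_mono (T := F a.unpair.1) ?_) ?_
    · rw [hFI]; exact Set.iInter_subset _ _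
    have ht := tendsto_measure_iUnion_atTop (μ := mu) (hmonoE a.unpair.1)
    rw [← hFU] at ht
    have ht2 := (ENNReal.tendsto_toReal (measure_ne_top mu (F a.unpair.1))).comp ht
    refine le_of_tendsto' ht2 fun s => ?_
    change muR _ ≤ _
    rw [cnt_eq, div_le_iff₀ (by positivity)]
    exact_mod_cast (h s).2

theorem realize {S : α × ℚ → Prop} (hS : Sig2 S) :
    ∃ Q : α → List Bool → ℕ → Bool, (Computable fun z : α × List Bool × ℕ => Q z.1 z.2.1 z.2.2) ∧
      ∀ m (β : ℝ), (∀ q : ℚ, S (m, q) ↔ β < q) → ∀ x : ℝ, 0 ≤ x → x < 1 →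
        (x < β → digits x ∈ Cls (Q m)) ∧ (digits x ∈ Cls (Q m) → x ≤ β) := by
  obtain ⟨R, hR, hRS⟩ := hS
  refine ⟨fun m τ n => decide (((val τ + 1 : ℕ) : ℚ) ≤ dq n.unpair.2 * 2 ^ τ.length) ||
    bEx (τ.length + 1) fun b => !R (m, dq n.unpair.2) n.unpair.1 b, ?_, ?_⟩
  · have h1 : Computable fun z : α × List Bool × ℕ => dq z.2.2.unpair.2 * 2 ^ z.2.1.length := by fun_prop
    have h2 : Computable fun z : α × List Bool × ℕ => ((val z.2.1 + 1 : ℕ) : ℚ) := by fun_prop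
    have h3 : Computable fun z : (α × List Bool × ℕ) × ℕ => R (z.1.1, dq z.1.2.2.unpair.2) z.1.2.2.unpair.1 z.2 :=
      hR.comp (f := fun z : (α × ℚ) × ℕ × ℕ => R z.1 z.2.1 z.2.2)
        (g := fun z : (α × List Bool × ℕ) × ℕ => ((z.1.1, dq z.1.2.2.unpair.2), z.1.2.2.unpair.1, z.2)) (by fun_prop)
    have h4 : Computable fun z : α × List Bool × ℕ => bEx (z.2.1.length + 1) fun b => !R (z.1, dq z.2.2.unpair.2) z.2.2.unpair.1 b := by
      fun_prop
    exact cp_or (cp_rat_le h2 h1) h4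
  intro m β hβ x hx0 hx1
  have key : ∀ k (q : ℚ), ((val (initSeg (digits x) k) + 1 : ℕ) : ℚ) ≤ q * 2 ^ k ↔
      ((⌊x * 2 ^ k⌋₊ : ℝ) + 1) ≤ q * 2 ^ k := by
    intro k q
    rw [val_digits hx0 hx1]
    constructor
    · intro h; exact_mod_cast h
    · intro h; exact_mod_cast h
  constructor
  · intro hx n
    simp only [Bool.or_eq_true, decide_eq_true_eq, bEx_iff, key, initSeg_length]
    set q := dq n.unpair.2
    by_cases hq : β < q
    · have hpos : (0 : ℝ) < q - x := by linarith
      obtain ⟨k, hk⟩ := exists_pow_lt_of_lt_one hpos (show (1 / 2 : ℝ) < 1 by norm_num)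
      refine ⟨k, Or.inl ?_⟩
      have h1 : (⌊x * 2 ^ k⌋₊ : ℝ) ≤ x * 2 ^ k := Nat.floor_le (by positivity)
      have h2 : (1 : ℝ) ≤ (q - x) * 2 ^ k := by
        have : (1 / 2 : ℝ) ^ k * 2 ^ k = 1 := by rw [← mul_pow]; norm_num
        have h3 : (0 : ℝ) < 2 ^ k := by positivity
        nlinarith
      linarith
    · have : ¬ ∃ a, ∀ b, R (m, q) a b = true := fun h => hq ((hβ q).1 ((hRS _).2 h))
      push Not at this
      obtain ⟨b, hb⟩ := this n.unpair.1
      exact ⟨b, Or.inr ⟨b, by omega, by simpa using hb⟩⟩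
  · intro hX
    by_contra hc
    push Not at hc
    obtain ⟨q, hq1, hq2⟩ := exists_rat_btwn hc
    obtain ⟨a, ha⟩ := (hRS _).1 ((hβ q).2 hq1)
    obtain ⟨k, hk⟩ := hX (Nat.pair a (Encodable.encode q))
    simp only [Bool.or_eq_true, decide_eq_true_eq, bEx_iff, key, initSeg_length, Nat.unpair_pair, dq_encode] at hk
    rcases hk with hk | ⟨b, _, hb⟩
    · have h1 : x * 2 ^ k < (⌊x * 2 ^ k⌋₊ : ℝ) + 1 := Nat.lt_floor_add_one _
      have h3 : (0 : ℝ) < 2 ^ k := by positivity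
      nlinarith
    · rw [ha b] at hb; simp at hb

end
end RandProb


namespace RandProb

theorem TOT_eq (u : CodeO) : TOT u = Cls fun τ n => (evalS u.encode τ n).isSome := by
  ext X
  refine forall_congr' fun n => ?_
  rw [Part.dom_iff_mem]
  constructor
  · rintro ⟨v, hv⟩
    obtain ⟨k, hk⟩ := evalS_iff.1 hv
    exact ⟨k, by simp [hk]⟩
  · rintro ⟨k, hk⟩
    obtain ⟨v, hv⟩ := Option.isSome_iff_exists.1 hk
    exact ⟨v, evalS_iff.2 ⟨k, hv⟩⟩

/-- Number of leading ones. -/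
def lead (τ : List Bool) : ℕ := τ.findIdx fun b => !b

theorem lead_comp : Computable lead := by
  apply Primrec.to_comp
  exact Primrec.list_findIdx Primrec.id (Primrec.not.comp Primrec.snd)

@[fun_prop] theorem cp_lead {α} [Primcodable α] {f : α → List Bool} (h : Computable f) :
    Computable fun x => lead (f x) := lead_comp.comp h

/-- The string `1^m 0`. -/
def ones (m : ℕ) : List Bool := List.replicate m true ++ [false]

theorem ones_length (m : ℕ) : (ones m).length = m + 1 := by simp [ones]

@[fun_prop] theorem cp_ones {α} [Primcodable α] {f : α → ℕ} (h : Computable f) :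
    Computable fun x => ones (f x) := by
  unfold ones; fun_prop

theorem lead_ones (m : ℕ) (τ : List Bool) : lead (ones m ++ τ) = m := by
  unfold lead ones
  induction m with
  | zero => simp [List.findIdx_cons]
  | succ m ih =>
    rw [List.replicate_succ, List.cons_append, List.cons_append, List.findIdx_cons]
    simp only [Bool.not_true, cond_false, ih]

theorem lead_replicate (m : ℕ) : lead (List.replicate m true) = m := by
  unfold lead
  induction m with
  | zero => simp
  | succ m ih =>
    rw [List.replicate_succ, List.findIdx_cons]
    simp only [Bool.not_true, cond_false, ih]

/-- Dispatch on the leading ones. -/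
def disp (h : ℕ → List Bool → ℕ → Option ℕ) (τ : List Bool) (n : ℕ) : Option ℕ :=
  bif decide (lead τ < τ.length) then h (lead τ) (τ.drop (lead τ + 1)) n else none

theorem disp_comp {h : ℕ → List Bool → ℕ → Option ℕ}
    (hh : Computable fun z : ℕ × List Bool × ℕ => h z.1 z.2.1 z.2.2) :
    Computable fun z : List Bool × ℕ => disp h z.1 z.2 := by
  unfold disp
  have : Computable fun z : List Bool × ℕ => h (lead z.1) (z.1.drop (lead z.1 + 1)) z.2 :=
    hh.comp (f := fun z : ℕ × List Bool × ℕ => h z.1 z.2.1 z.2.2)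
      (g := fun z : List Bool × ℕ => (lead z.1, z.1.drop (lead z.1 + 1), z.2)) (by fun_prop)
  fun_prop

theorem initSeg_ones_lt (m : ℕ) (Y : Cantor) {k : ℕ} (hk : k ≤ m) :
    initSeg (prepend (ones m) Y) k = List.replicate k true := by
  have h := initSeg_take (prepend (ones m) Y) (show k ≤ (ones m).length + 0 by rw [ones_length]; omega)
  rw [initSeg_prepend] at h
  rw [← h, ones, List.append_assoc, List.take_append_of_le_length (by simpa using hk), List.take_replicate]
  congr 1; omega

theorem disp_iff {h : ℕ → List Bool → ℕ → Option ℕ} {m : ℕ} {Y : Cantor} {n v : ℕ} :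
    (∃ k, disp h (initSeg (prepend (ones m) Y) k) n = some v) ↔ ∃ k, h m (initSeg Y k) n = some v := by
  have key : ∀ k, disp h (initSeg (prepend (ones m) Y) ((ones m).length + k)) n = h m (initSeg Y k) n := by
    intro k
    rw [initSeg_prepend]
    unfold disp
    rw [lead_ones]
    have h1 : m < (ones m ++ initSeg Y k).length := by simp [ones_length]; omega
    have h2 : (ones m ++ initSeg Y k).drop (m + 1) = initSeg Y k := by
      rw [← ones_length m, List.drop_left]
    rw [h2, decide_eq_true h1, cond_true]
  constructor
  · rintro ⟨k, hk⟩
    by_cases hkm : k ≤ m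
    · rw [initSeg_ones_lt m Y hkm] at hk
      simp [disp, lead_replicate] at hk
    · obtain ⟨k', rfl⟩ : ∃ k', k = (ones m).length + k' := ⟨k - (m + 1), by rw [ones_length]; omega⟩
      exact ⟨k', by rw [← key]; exact hk⟩
  · rintro ⟨k, hk⟩
    exact ⟨_, (key k).trans hk⟩

theorem isSome_ex {g : ℕ → Option ℕ} : (∃ k, (g k).isSome = true) ↔ ∃ v k, g k = some v := by
  simp only [Option.isSome_iff_exists]
  exact exists_comm

theorem right_ce (u : CodeO) : RightCeIn (iterJump 1) (muR (TOT u)) := by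
  rw [rightCe_iff, TOT_eq]
  have h := cls_sig2 (Q := fun (_ : ℕ) τ n => (evalS u.encode τ n).isSome) (by fun_prop)
  have h2 := h.precomp (f := fun q : ℚ => (0, q)) (by fun_prop)
  exact h2.ceX

end RandProb


namespace RandProb

theorem vol_step {V : Set ℝ} (hV : volume V ≠ ⊤) {p y q : ℝ} (hpy : p < y) (hyq : y < q) (h : Set.Ioo p q ⊆ V) :
    volume.real (V ∩ Set.Ioi y) + (y - p) ≤ volume.real (V ∩ Set.Ioi p) := by
  have hd : Disjoint (V ∩ Set.Ioi y) (Set.Ioc p y) := by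
    rw [Set.disjoint_left]
    intro x hx hx2
    exact absurd hx.2 (not_lt.2 hx2.2)
  have h1 : volume.real ((V ∩ Set.Ioi y) ∪ Set.Ioc p y) = volume.real (V ∩ Set.Ioi y) + volume.real (Set.Ioc p y) :=
    measureReal_union hd measurableSet_Ioc (measure_ne_top_of_subset Set.inter_subset_left hV) (by simp)
  have h2 : volume.real (Set.Ioc p y) = y - p := by
    rw [Real.volume_real_Ioc_of_le hpy.le]
  rw [← h2, ← h1]
  apply measureReal_mono _ (measure_ne_top_of_subset Set.inter_subset_left hV)
  rintro x (hx | hx)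
  · exact ⟨hx.1, hpy.trans hx.2⟩
  · exact ⟨h ⟨hx.1, lt_of_le_of_lt hx.2 hyq⟩, hx.1⟩

theorem abs_inv {V : Set ℝ} {w : ℝ} (hw : 0 < w) (hV : volume V ≤ ENNReal.ofReal (w / 2)) {A B : ℕ → ℝ}
    (hA : Antitone A) (hB0 : B 0 = 1)
    (hstep : ∀ s, B (s + 1) = B s ∨ ∃ p q : ℝ, Set.Ioo p q ⊆ V ∧ p < w * B s + A s ∧ w * B s + A s < q ∧
      w * B (s + 1) = p - A s) : Antitone B ∧ ∀ s, 1 / 2 ≤ B s := by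
  have hVt : volume V ≠ ⊤ := ne_top_of_le_ne_top ENNReal.ofReal_ne_top hV
  have hanti : ∀ s, B (s + 1) ≤ B s := by
    intro s
    rcases hstep s with h | ⟨p, q, _, h1, _, h2⟩
    · exact h.le
    · by_contra hc
      push Not at hc
      nlinarith
  refine ⟨antitone_nat_of_succ_le hanti, fun s => ?_⟩
  have mono : ∀ a b : ℝ, a ≤ b → volume.real (V ∩ Set.Ioi b) ≤ volume.real (V ∩ Set.Ioi a) := fun a b hab =>
    measureReal_mono (Set.inter_subset_inter_right _ (Set.Ioi_subset_Ioi hab))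
      (measure_ne_top_of_subset Set.inter_subset_left hVt)
  have inv : ∀ s, w * (1 - B s) ≤ volume.real (V ∩ Set.Ioi (w * B s + A s)) := by
    intro s
    induction s with
    | zero => rw [hB0]; simp
    | succ s ih =>
      have hAs : A (s + 1) ≤ A s := hA (Nat.le_succ s)
      rcases hstep s with h | ⟨p, q, hpq, h1, h2, h3⟩
      · rw [h]
        exact ih.trans (mono _ _ (by linarith))
      · have := vol_step hVt h1 h2 hpq
        have h4 := mono (w * B (s + 1) + A (s + 1)) p (by linarith)
        linarith
  have h1 := inv s
  have h2 : volume.real (V ∩ Set.Ioi (w * B s + A s)) ≤ w / 2 := by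
    refine le_trans (measureReal_mono Set.inter_subset_left hVt) ?_
    rw [measureReal_def]
    exact ENNReal.toReal_le_of_le_ofReal (by positivity) hV
  nlinarith

/-- The cone used for parameter `m`. -/
def cone (m : ℕ) : List Bool := ((Encodable.decode m : Option (List Bool)).getD []) ++ ones m

@[fun_prop] theorem cp_cone {α} [Primcodable α] {f : α → ℕ} (h : Computable f) :
    Computable fun x => cone (f x) := by
  unfold cone; fun_prop

/-- Totality off a cone. -/
noncomputable def offG (u m : ℕ) (τ : List Bool) (n : ℕ) : Bool :=
  bif decide (n = 0) then decide ((cone m).length ≤ τ.length) && !decide (τ.take (cone m).length = cone m)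
  else (evalS u τ (n - 1)).isSome

theorem offG_comp (u : ℕ) : Computable fun z : ℕ × List Bool × ℕ => offG u z.1 z.2.1 z.2.2 := by
  unfold offG
  have h1 : Computable fun z : ℕ × List Bool × ℕ => decide ((cone z.1).length ≤ z.2.1.length) := by fun_prop
  have h2 : Computable fun z : ℕ × List Bool × ℕ => decide (z.2.1.take (cone z.1).length = cone z.1) := by fun_prop
  have h3 : Computable fun z : ℕ × List Bool × ℕ => (evalS u z.2.1 (z.2.2 - 1)).isSome := by fun_prop
  have h4 : Computable fun z : ℕ × List Bool × ℕ => decide (z.2.2 = 0) :=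
    cp_eq (Computable.snd.comp Computable.snd) (Computable.const 0)
  exact cp_cond h4 (cp_and h1 (cp_not h2)) h3

theorem offG_cls (u : CodeO) (m : ℕ) : Cls (offG u.encode m) = {X | ¬ Extends X (cone m) ∧ X ∈ TOT u} := by
  ext X
  rw [TOT_eq]
  constructor
  · intro h
    constructor
    · obtain ⟨k, hk⟩ := h 0
      simp [offG, initSeg_length] at hk
      rw [initSeg_take _ hk.1] at hk
      exact hk.2
    · intro n
      obtain ⟨k, hk⟩ := h (n + 1)
      exact ⟨k, by simpa [offG] using hk⟩
  · rintro ⟨h1, h2⟩ n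
    cases n with
    | zero =>
      refine ⟨(cone m).length, ?_⟩
      simp [offG, initSeg_length]
      rw [initSeg_take _ le_rfl]
      exact h1
    | succ n =>
      obtain ⟨k, hk⟩ := h2 n
      exact ⟨k, by simpa [offG] using hk⟩

theorem random (u : CodeO) (hu : UniversalOM u) : MLRandomIn (iterJump 1) (muR (TOT u)) := by
  obtain ⟨σ, -, -, hσ⟩ := hu
  intro W hW hvol
  by_contra hcon
  push Not at hcon
  obtain ⟨PW, hPW, hPWi, hPWm⟩ := (ceX_of_ceIn hW).mono
  let γ : ℕ → ℝ := fun m => muR (Cls (offG u.encode m))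
  have hγ : CeX fun z : ℕ × ℚ => γ z.1 < z.2 := (cls_sig2 (offG_comp u.encode)).ceX
  obtain ⟨A, hA, hAp⟩ := exists_appr hγ fun m => lt_of_le_of_lt (muR_le_one _) (by norm_num)
  let P : List Bool → ℚ := fun τ => dq τ.length.unpair.1.unpair.1
  let Qe : List Bool → ℚ := fun τ => dq τ.length.unpair.1.unpair.2
  have hP : Computable P := by unfold P; fun_prop
  have hQe : Computable Qe := by unfold Qe; fun_prop
  let sm : ℕ → List Bool → ℚ → ℚ := fun m τ b => (1 / 2) ^ (cone m).length * b + A m τ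
  have hsm : Computable fun z : ℕ × List Bool × ℚ => sm z.1 z.2.1 z.2.2 := by unfold sm; fun_prop
  let cnd : ℕ → List Bool → ℚ → Bool := fun m τ b =>
    PW τ (Nat.pair ((cone m).length + 1) (Encodable.encode (P τ, Qe τ))) && (decide (P τ < sm m τ b) && decide (sm m τ b < Qe τ))
  have hcnd : Computable fun z : ℕ × List Bool × ℚ => cnd z.1 z.2.1 z.2.2 := by
    unfold cnd
    have h1 : Computable fun z : ℕ × List Bool × ℚ =>
        PW z.2.1 (Nat.pair ((cone z.1).length + 1) (Encodable.encode (P z.2.1, Qe z.2.1))) := by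
      have h2 : Computable fun z : ℕ × List Bool × ℚ => P z.2.1 := hP.comp (by fun_prop)
      have h3 : Computable fun z : ℕ × List Bool × ℚ => Qe z.2.1 := hQe.comp (by fun_prop)
      have gen : ∀ (g1 : ℕ × List Bool × ℚ → List Bool) (g2 : ℕ × List Bool × ℚ → ℕ), Computable g1 → Computable g2 →
          Computable fun z => PW (g1 z) (g2 z) := fun g1 g2 h1 h2 => hPW.comp (cp_mk h1 h2)
      have h4 : Computable fun z : ℕ × List Bool × ℚ => Encodable.encode (P z.2.1, Qe z.2.1) :=
        cp_encode (cp_mk h2 h3)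
      have h5 : Computable fun z : ℕ × List Bool × ℚ => (cone z.1).length + 1 := by fun_prop
      exact gen _ _ (Computable.fst.comp Computable.snd) (cp_pair h5 h4)
    have h2 : Computable fun z : ℕ × List Bool × ℚ => P z.2.1 := hP.comp (by fun_prop)
    have h3 : Computable fun z : ℕ × List Bool × ℚ => Qe z.2.1 := hQe.comp (by fun_prop)
    exact cp_and h1 (cp_and (cp_rat_lt h2 hsm) (cp_rat_lt hsm h3))
  let step : ℕ → List Bool → ℚ → ℚ := fun m τ b =>
    bif cnd m τ b then (P τ - A m τ) * 2 ^ (cone m).length else b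
  have hstep : Computable fun z : ℕ × List Bool × ℚ => step z.1 z.2.1 z.2.2 := by
    unfold step
    have h2 : Computable fun z : ℕ × List Bool × ℚ => P z.2.1 := hP.comp (by fun_prop)
    have h3 : Computable fun z : ℕ × List Bool × ℚ => (P z.2.1 - A z.1 z.2.1) * 2 ^ (cone z.1).length := by fun_prop
    exact cp_cond hcnd h3 (by fun_prop)
  let B : ℕ → List Bool → ℚ := run (fun _ => 1) step
  have hB : Computable fun z : ℕ × List Bool => B z.1 z.2 := cp_run (Computable.const 1) hstep
  obtain ⟨Q, hQ, hQp⟩ := realize (ceX_seq hB).sig2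
  -- the machine
  let h : ℕ → List Bool → ℕ → Option ℕ := fun m τ n => bif Q m τ n then some 0 else none
  have hh : Computable fun z : ℕ × List Bool × ℕ => h z.1 z.2.1 z.2.2 :=
    cp_cond hQ (Computable.const _) (Computable.const _)
  obtain ⟨M, hM⟩ := exists_machine (disp_comp hh)
  let m := Encodable.encode (σ M)
  have hcone : cone m = σ M ++ ones m := by
    unfold cone m
    rw [Encodable.encodek]; rfl
  have htot : {Y | prepend (cone m) Y ∈ TOT u} = Cls (Q m) := by
    ext Y
    refine forall_congr' fun n => ?_
    rw [hcone, prepend_append, hσ]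
    unfold evalO
    rw [(hM _ n).1, isSome_ex]
    simp only [disp_iff]
    rw [← isSome_ex]
    refine exists_congr fun k => ?_
    unfold h
    cases Q m (initSeg Y k) n <;> simp
  have hmeas : MeasurableSet (TOT u) := by rw [TOT_eq]; exact meas_cls _
  have hsplit := muR_split (cone m) hmeas
  rw [htot, ← offG_cls] at hsplit
  obtain ⟨hA1, hA2, -, -, hA3⟩ := hAp m
  set w : ℝ := (1 / 2) ^ (cone m).length with hwdef
  have hw : 0 < w := by positivity
  have hw2 : w * 2 ^ (cone m).length = 1 := by rw [hwdef, ← mul_pow]; norm_num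
  let a : ℕ → ℝ := fun k => A m (initSeg X' k)
  let b : ℕ → ℝ := fun k => B m (initSeg X' k)
  let V := testSet W ((cone m).length + 1)
  have hV : volume V ≤ ENNReal.ofReal (w / 2) := by
    refine (hvol _).trans (le_of_eq ?_)
    congr 1
    rw [hwdef, pow_succ]; norm_num; ring
  have hsmr : ∀ s, ((sm m (initSeg X' s) (B m (initSeg X' s)) : ℚ) : ℝ) = w * b s + a s := by
    intro s; simp [sm, hwdef, a, b]
  have hnext : ∀ s, b (s + 1) = if cnd m (initSeg X' s) (B m (initSeg X' s)) = true then
      ((P (initSeg X' s) : ℝ) - a s) * 2 ^ (cone m).length else b s := by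
    intro s
    unfold b B
    rw [run_succ]
    unfold step
    cases cnd m (initSeg X' s) (run (fun _ => 1) step m (initSeg X' s)) <;> simp [a]
  have hact : ∀ s, cnd m (initSeg X' s) (B m (initSeg X' s)) = true → w * b (s + 1) = P (initSeg X' s) - a s := by
    intro s hs
    rw [hnext, if_pos hs, mul_comm ((P _ : ℝ) - a s), ← mul_assoc, hw2, one_mul]
  have haa : Antitone a := fun i j hij => by
    have : A m (initSeg X' j) ≤ A m (initSeg X' i) := hA1 hij
    unfold a
    exact_mod_cast this
  obtain ⟨hbanti, hbhalf⟩ := abs_inv hw hV haa (B := b) (by simp [b, B, run_zero]) (by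
    intro s
    by_cases hs : cnd m (initSeg X' s) (B m (initSeg X' s)) = true
    · right
      have hs' := hs
      simp only [cnd, Bool.and_eq_true, decide_eq_true_eq] at hs'
      obtain ⟨h1, h2, h3⟩ := hs'
      refine ⟨P (initSeg X' s), Qe (initSeg X' s), ?_, ?_, ?_, hact s hs⟩
      · intro x hx
        exact ⟨P (initSeg X' s), Qe (initSeg X' s), (hPWi _).2 ⟨s, h1⟩, hx.1, hx.2⟩
      · rw [← hsmr]; exact_mod_cast h2
      · rw [← hsmr]; exact_mod_cast h3
    · left
      rw [hnext, if_neg hs])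
  let β : ℝ := ⨅ k, b k
  have hbdd : BddBelow (Set.range b) := ⟨1 / 2, by rintro _ ⟨k, rfl⟩; exact hbhalf k⟩
  have hβle : ∀ k, β ≤ b k := fun k => ciInf_le hbdd k
  have hβhalf : 1 / 2 ≤ β := le_ciInf hbhalf
  have hβ1 : β ≤ 1 := (hβle 0).trans (by simp [b, B, run_zero])
  have hcut : ∀ q : ℚ, (∃ k, B m (initSeg X' k) < q) ↔ β < q := by
    intro q
    rw [ciInf_lt_iff hbdd]
    refine exists_congr fun k => ?_
    unfold b
    exact_mod_cast Iff.rfl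
  have hQm := hQp m β hcut
  have hmu : muR (Cls (Q m)) = β - 0 := muR_interval (meas_cls _) le_rfl (by linarith) hβ1
    (fun x h0 h1 _ hx => (hQm x h0 h1).1 hx) (fun x h0 h1 hx => ⟨h0, (hQm x h0 h1).2 hx⟩)
  rw [hmu, sub_zero] at hsplit
  obtain ⟨p, q, hpqW, hp, hq⟩ := hcon ((cone m).length + 1)
  rw [hsplit] at hp hq
  change (p : ℝ) < w * β + γ m at hp
  change w * β + γ m < q at hq
  have hε : 0 < (q - (w * β + γ m)) / 2 := by linarith
  obtain ⟨k1, hk1⟩ := hA3 (γ m + (q - (w * β + γ m)) / 2) (by linarith)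
  obtain ⟨k2, hk2⟩ : ∃ k, b k < β + (q - (w * β + γ m)) / 2 := exists_lt_of_ciInf_lt (lt_add_of_pos_right _ hε)
  obtain ⟨k3, hk3⟩ := (hPWi _).1 hpqW
  let s := Nat.pair (Nat.pair (Encodable.encode p) (Encodable.encode q)) (k1 + k2 + k3)
  have hs : k1 + k2 + k3 ≤ s := Nat.right_le_pair _ _
  have hPs : P (initSeg X' s) = p := by simp [P, initSeg_length, s, dq_encode]
  have hQs : Qe (initSeg X' s) = q := by simp [Qe, initSeg_length, s, dq_encode]
  have has : a s < γ m + (q - (w * β + γ m)) / 2 := lt_of_le_of_lt (haa (by omega)) hk1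
  have hbs : b s < β + (q - (w * β + γ m)) / 2 := lt_of_le_of_lt (hbanti (by omega)) hk2
  have hw1 : w ≤ 1 := pow_le_one₀ (by norm_num) (by norm_num)
  have hag : γ m < a s := hA2 s
  have hc : cnd m (initSeg X' s) (B m (initSeg X' s)) = true := by
    simp only [cnd, Bool.and_eq_true, decide_eq_true_eq]
    rw [hPs, hQs]
    refine ⟨hPWm _ k3 s (by omega) hk3, ?_, ?_⟩
    · have : (p : ℝ) < sm m (initSeg X' s) (B m (initSeg X' s)) := by
        rw [hsmr]
        have := mul_le_mul_of_nonneg_left (hβle s) hw.le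
        linarith
      exact_mod_cast this
    · have : (sm m (initSeg X' s) (B m (initSeg X' s)) : ℝ) < q := by
        rw [hsmr]
        have h1 : w * (b s - β) ≤ 1 * (b s - β) := mul_le_mul_of_nonneg_right hw1 (by linarith [hβle s])
        linarith
      exact_mod_cast this
  have h1 := hact s hc
  rw [hPs] at h1
  have h2 := mul_le_mul_of_nonneg_left (hβle (s + 1)) hw.le
  linarith

end RandProb


namespace RandProb

/-- The data of a Kučera–Slaman construction. -/
structure KS (α β δ : ℝ) (a b x c : ℕ → ℝ) : Prop where
  hδ : 0 < δ
  hβ : 0 ≤ β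
  aA : Antitone a
  bA : Antitone b
  ha : ∀ s, α < a s
  hb : ∀ s, β < b s
  hb2 : ∀ s, b s ≤ 2
  ha' : ∀ r, α < r → ∃ s, a s < r
  hb' : ∀ r, β < r → ∃ s, b s < r
  hα : α < 2
  x0 : x 0 = 2
  c0 : c 0 = 2
  act : ∀ s, a s ≤ x s → x (s + 1) = a s - δ * (c s - b s) ∧ c (s + 1) = b s
  nact : ∀ s, ¬ a s ≤ x s → x (s + 1) = x s ∧ c (s + 1) = c s

variable {α β δ : ℝ} {a b x c : ℕ → ℝ}

theorem KS.cb (h : KS α β δ a b x c) (s : ℕ) : b s ≤ c s := by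
  induction s with
  | zero => rw [h.c0]; exact h.hb2 0
  | succ s ih =>
    by_cases hs : a s ≤ x s
    · rw [(h.act s hs).2]; exact h.bA (Nat.le_succ s)
    · rw [(h.nact s hs).2]; exact (h.bA (Nat.le_succ s)).trans ih

theorem KS.cA (h : KS α β δ a b x c) : Antitone c := by
  apply antitone_nat_of_succ_le
  intro s
  by_cases hs : a s ≤ x s
  · rw [(h.act s hs).2]; exact h.cb s
  · rw [(h.nact s hs).2]

theorem KS.vol (h : KS α β δ a b x c) :
    volume (⋃ s, {r : ℝ | a s ≤ x s ∧ a s - 2 * δ * (c s - b s) < r ∧ r < a s}) ≤ ENNReal.ofReal (4 * δ) := by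
  have h1 : ∀ s, volume {r : ℝ | a s ≤ x s ∧ a s - 2 * δ * (c s - b s) < r ∧ r < a s} ≤
      ENNReal.ofReal (2 * δ * (c s - c (s + 1))) := by
    intro s
    by_cases hs : a s ≤ x s
    · rw [(h.act s hs).2]
      have : {r : ℝ | a s ≤ x s ∧ a s - 2 * δ * (c s - b s) < r ∧ r < a s} ⊆
          Set.Ioo (a s - 2 * δ * (c s - b s)) (a s) := fun r hr => hr.2
      refine (measure_mono this).trans ?_
      rw [Real.volume_Ioo]
      apply ENNReal.ofReal_le_ofReal
      linarith
    · have : {r : ℝ | a s ≤ x s ∧ a s - 2 * δ * (c s - b s) < r ∧ r < a s} ⊆ ∅ := fun r hr => hs hr.1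
      refine (measure_mono this).trans ?_
      simp
  refine (measure_iUnion_le _).trans ((ENNReal.tsum_le_tsum h1).trans ?_)
  rw [ENNReal.tsum_eq_iSup_nat]
  refine iSup_le fun N => ?_
  rw [← ENNReal.ofReal_sum_of_nonneg]
  · apply ENNReal.ofReal_le_ofReal
    rw [← Finset.mul_sum, Finset.sum_range_sub', h.c0]
    have := h.cb N
    have := h.hb N
    have := h.hβ
    have := h.hδ
    nlinarith
  · intro s _
    have := h.cA (Nat.le_succ s)
    have := h.hδ
    have : 0 ≤ c s - c (s + 1) := by linarith
    positivity

theorem KS.xα (h : KS α β δ a b x c)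
    (hV : α ∉ ⋃ s, {r : ℝ | a s ≤ x s ∧ a s - 2 * δ * (c s - b s) < r ∧ r < a s}) (s : ℕ) : α < x s := by
  induction s with
  | zero => rw [h.x0]; exact h.hα
  | succ s ih =>
    by_cases hs : a s ≤ x s
    · rw [(h.act s hs).1]
      have h1 : ¬ (a s - 2 * δ * (c s - b s) < α) := by
        intro hc
        exact hV (Set.mem_iUnion.2 ⟨s, hs, hc, h.ha s⟩)
      push Not at h1
      have h2 := h.cb s
      have h3 := h.hδ
      have h4 := h.ha s
      have : 0 ≤ δ * (c s - b s) := mul_nonneg h3.le (by linarith)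
      rcases this.lt_or_eq with h5 | h5 <;> linarith
    · rw [(h.nact s hs).1]; exact ih

theorem KS.inf_act (h : KS α β δ a b x c)
    (hV : α ∉ ⋃ s, {r : ℝ | a s ≤ x s ∧ a s - 2 * δ * (c s - b s) < r ∧ r < a s}) (N : ℕ) :
    ∃ t ≥ N, a t ≤ x t := by
  by_contra hc
  push Not at hc
  have h1 : ∀ k, x (N + k) = x N := by
    intro k
    induction k with
    | zero => rfl
    | succ k ih =>
      rw [← add_assoc, (h.nact (N + k) (not_le.2 (hc _ (by omega)))).1, ih]
  obtain ⟨s, hs⟩ := h.ha' _ (h.xα hV N)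
  have h2 := hc (N + s) (by omega)
  rw [h1] at h2
  have h3 := h.aA (show s ≤ N + s by omega)
  linarith

theorem KS.cut (h : KS α β δ a b x c)
    (hV : α ∉ ⋃ s, {r : ℝ | a s ≤ x s ∧ a s - 2 * δ * (c s - b s) < r ∧ r < a s}) (q : ℝ) :
    (∃ s, x s - δ * c s < q) ↔ α - δ * β < q := by
  have hδ := h.hδ
  have yA : Antitone fun s => x s - δ * c s := by
    apply antitone_nat_of_succ_le
    intro s
    by_cases hs : a s ≤ x s
    · rw [(h.act s hs).1, (h.act s hs).2]; linarith
    · rw [(h.nact s hs).1, (h.nact s hs).2]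
  constructor
  · rintro ⟨s, hs⟩
    refine lt_of_le_of_lt ?_ hs
    by_contra hc
    push Not at hc
    have hε : 0 < (α - δ * β - (x s - δ * c s)) / δ := div_pos (by linarith) hδ
    obtain ⟨k, hk⟩ := h.hb' (β + (α - δ * β - (x s - δ * c s)) / δ) (by linarith)
    obtain ⟨t, ht, hat⟩ := h.inf_act hV k
    obtain ⟨t', ht', hat'⟩ := h.inf_act hV (max (t + 1) s)
    have h1 : c t' < β + (α - δ * β - (x s - δ * c s)) / δ := by
      have e1 := h.cA (show t + 1 ≤ t' from (le_max_left _ _).trans ht')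
      rw [(h.act t hat).2] at e1
      have e2 := h.bA ht
      linarith
    have h2 : x (t' + 1) - δ * c (t' + 1) ≤ x s - δ * c s := yA (((le_max_right _ _).trans ht').trans (Nat.le_succ _))
    rw [(h.act t' hat').1, (h.act t' hat').2] at h2
    have h3 := h.ha t'
    have h4 := mul_lt_mul_of_pos_left h1 hδ
    rw [mul_add, mul_div_cancel₀ _ hδ.ne'] at h4
    linarith
  · intro hq
    obtain ⟨k, hk⟩ := h.ha' (q + δ * β) (by linarith)
    obtain ⟨t, ht, hat⟩ := h.inf_act hV k
    refine ⟨t + 1, ?_⟩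
    rw [(h.act t hat).1, (h.act t hat).2]
    have h1 := h.aA ht
    have h2 := mul_lt_mul_of_pos_left (lt_of_lt_of_le (h.hb t) (h.cb t)) hδ
    linarith

end RandProb


namespace RandProb

/-- The standard universal dispatch. -/
noncomputable def UD (τ : List Bool) (n : ℕ) : Option ℕ := disp (fun j τ n => evalS j τ n) τ n

theorem UD_comp : Computable fun z : List Bool × ℕ => UD z.1 z.2 :=
  disp_comp (by fun_prop)

theorem extends_zero {x : ℝ} (h0 : 0 ≤ x) (h1 : x < 1) (c : ℕ) :
    Extends (digits x) (List.replicate c false) ↔ x < (1 / 2) ^ c := by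
  have h2 : x < (1 / 2) ^ c ↔ ⌊x * 2 ^ c⌋₊ = 0 := by
    rw [Nat.floor_eq_zero, one_div, inv_pow, ← one_div, lt_div_iff₀ (by positivity)]
  have h3 : val (List.replicate c false) = 0 := by
    clear h2
    induction c with
    | zero => rfl
    | succ c ih => rw [List.replicate_succ', val_append, ih]; rfl
  have h4 : strOf c 0 = List.replicate c false := by
    unfold strOf
    rw [List.eq_replicate_iff]
    refine ⟨by simp, ?_⟩
    intro b hb
    simp at hb
    exact hb.2
  rw [h2]
  unfold Extends
  rw [List.length_replicate]
  constructor
  · intro h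
    rw [← val_digits h0 h1, h, h3]
  · intro h
    rw [seg_strOf h0, h, h4]

/-- The machine function: `UD` on the cone `0^c`, `Q` off it. -/
noncomputable def UG (c : ℕ) (Q : List Bool → ℕ → Bool) (τ : List Bool) (n : ℕ) : Option ℕ :=
  bif decide (c ≤ τ.length) then
    bif decide (τ.take c = List.replicate c false) then UD (τ.drop c) n
    else bif bEx (τ.length + 1) (fun k => Q (τ.take k) n) then some 0 else none
  else none

theorem UG_comp (c : ℕ) {Q : List Bool → ℕ → Bool} (hQ : Computable fun z : List Bool × ℕ => Q z.1 z.2) :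
    Computable fun z : List Bool × ℕ => UG c Q z.1 z.2 := by
  unfold UG
  have h1 : Computable fun z : List Bool × ℕ => decide (c ≤ z.1.length) := by fun_prop
  have h2 : Computable fun z : List Bool × ℕ => decide (z.1.take c = List.replicate c false) := by fun_prop
  have h3 : Computable fun z : List Bool × ℕ => UD (z.1.drop c) z.2 :=
    UD_comp.comp (f := fun z : List Bool × ℕ => UD z.1 z.2) (g := fun z : List Bool × ℕ => (z.1.drop c, z.2)) (by fun_prop)
  have h4 : Computable fun z : List Bool × ℕ => bEx (z.1.length + 1) (fun k => Q (z.1.take k) z.2) := by fun_prop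
  exact cp_cond h1 (cp_cond h2 h3 (cp_cond h4 (Computable.const _) (Computable.const _))) (Computable.const _)

theorem UG_cone (c : ℕ) (Q : List Bool → ℕ → Bool) (Y : Cantor) (n v : ℕ) :
    (∃ k, UG c Q (initSeg (prepend (List.replicate c false) Y) k) n = some v) ↔ ∃ k, UD (initSeg Y k) n = some v := by
  have key : ∀ k, UG c Q (initSeg (prepend (List.replicate c false) Y) ((List.replicate c false).length + k)) n =
      UD (initSeg Y k) n := by
    intro k
    rw [initSeg_prepend]
    have h1 : c ≤ (List.replicate c false ++ initSeg Y k).length := by simp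
    have h2 : (List.replicate c false ++ initSeg Y k).take c = List.replicate c false := by
      rw [List.take_append_of_le_length (by simp)]; simp
    have h3 : (List.replicate c false ++ initSeg Y k).drop c = initSeg Y k := by
      have := List.drop_left (l₁ := List.replicate c false) (l₂ := initSeg Y k)
      rwa [List.length_replicate] at this
    unfold UG
    rw [h2, h3, decide_eq_true h1, decide_eq_true rfl, cond_true, cond_true]
  constructor
  · rintro ⟨k, hk⟩
    by_cases hc : c ≤ k
    · obtain ⟨k', rfl⟩ : ∃ k', k = (List.replicate c false).length + k' := ⟨k - c, by simp; omega⟩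
      exact ⟨k', by rw [← key]; exact hk⟩
    · unfold UG at hk
      rw [initSeg_length, decide_eq_false hc] at hk
      simp at hk
  · rintro ⟨k, hk⟩
    exact ⟨_, (key k).trans hk⟩

theorem UG_off (c : ℕ) (Q : List Bool → ℕ → Bool) {X : Cantor} (hX : ¬ Extends X (List.replicate c false)) (n : ℕ) :
    (∃ k, (UG c Q (initSeg X k) n).isSome = true) ↔ ∃ k, Q (initSeg X k) n = true := by
  unfold Extends at hX
  rw [List.length_replicate] at hX
  have key : ∀ k, c ≤ k → ((UG c Q (initSeg X k) n).isSome = true ↔ ∃ j ≤ k, Q (initSeg X j) n = true) := by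
    intro k hk
    unfold UG
    rw [initSeg_length, initSeg_take X hk, decide_eq_true hk, decide_eq_false hX, cond_true, cond_false]
    have : bEx (k + 1) (fun j => Q ((initSeg X k).take j) n) = true ↔ ∃ j ≤ k, Q (initSeg X j) n = true := by
      rw [bEx_iff]
      simp only [Nat.lt_succ_iff]
      refine exists_congr fun j => and_congr_right fun hj => ?_
      rw [initSeg_take X hj]
    rw [← this]
    cases bEx (k + 1) (fun j => Q ((initSeg X k).take j) n) <;> simp
  constructor
  · rintro ⟨k, hk⟩
    by_cases hc : c ≤ k
    · obtain ⟨j, _, hj⟩ := (key k hc).1 hk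
      exact ⟨j, hj⟩
    · unfold UG at hk
      rw [initSeg_length, decide_eq_false hc] at hk
      simp at hk
  · rintro ⟨k, hk⟩
    exact ⟨max c k, (key _ (le_max_left _ _)).2 ⟨k, le_max_right _ _, hk⟩⟩

theorem ones_prefix {j k : ℕ} (h : ones j <+: ones k) : j = k := by
  obtain ⟨t, ht⟩ := h
  have h1 := lead_ones j t
  have h2 := lead_ones k []
  rw [List.append_nil] at h2
  rw [ht, h2] at h1
  exact h1.symm

/-- Totality probability of the dispatch machine. -/
noncomputable def β0 : ℝ := muR (Cls fun τ n => (UD τ n).isSome)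

theorem build {c : ℕ} {Q : List Bool → ℕ → Bool} (hQ : Computable fun z : List Bool × ℕ => Q z.1 z.2) {γ : ℝ}
    (hγ1 : (1 / 2) ^ c ≤ γ) (hγ2 : γ ≤ 1)
    (hr : ∀ x : ℝ, 0 ≤ x → x < 1 → (x < γ → digits x ∈ Cls Q) ∧ (digits x ∈ Cls Q → x ≤ γ)) :
    ∃ u : CodeO, UniversalOM u ∧ muR (TOT u) = (1 / 2) ^ c * β0 + (γ - (1 / 2) ^ c) := by
  obtain ⟨u, hu⟩ := exists_machine (UG_comp c hQ)
  refine ⟨u, ⟨fun d => List.replicate c false ++ ones d.encode, ⟨fun e => Encodable.encode (List.replicate c false ++ ones e),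
    by fun_prop, fun d => rfl⟩, ?_, ?_⟩, ?_⟩
  · rintro _ ⟨d, rfl⟩ _ ⟨e, rfl⟩ h
    change List.replicate c false ++ ones d.encode <+: List.replicate c false ++ ones e.encode at h
    rw [List.prefix_append_right_inj] at h
    change List.replicate c false ++ ones d.encode = List.replicate c false ++ ones e.encode
    rw [ones_prefix h]
  · intro d X n
    change evalO (prepend (List.replicate c false ++ ones d.encode) X) u n = _
    rw [prepend_append]
    set Z := prepend (List.replicate c false) (prepend (ones d.encode) X) with hZ
    have key : ∀ v, (∃ k, UG c Q (initSeg Z k) n = some v) ↔ v ∈ d.eval (oX X) n := by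
      intro v
      rw [hZ, UG_cone]
      unfold UD
      rw [disp_iff, evalS_iff]
    have hsub : ∀ v, v ∈ u.eval (oX Z) n → v ∈ d.eval (oX X) n := fun v hv => (key v).1 ((hu Z n).2 v hv)
    apply Part.ext
    intro v
    refine ⟨hsub v, fun hv => ?_⟩
    have hd : (u.eval (oX Z) n).Dom := by
      rw [(hu Z n).1, isSome_ex]
      exact ⟨v, (key v).2 hv⟩
    obtain ⟨v', hv'⟩ := Part.dom_iff_mem.1 hd
    rw [Part.mem_unique hv (hsub v' hv')]
    exact hv'
  · have hm : MeasurableSet (TOT u) := by rw [TOT_eq]; exact meas_cls _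
    rw [muR_split (List.replicate c false) hm, List.length_replicate]
    congr 1
    · unfold β0
      congr 2
      ext Y
      refine forall_congr' fun n => ?_
      unfold evalO
      rw [(hu _ n).1, isSome_ex]
      simp only [UG_cone]
      rw [← isSome_ex]
    · have e : {X | ¬ Extends X (List.replicate c false) ∧ X ∈ TOT u} =
          {X | ¬ Extends X (List.replicate c false) ∧ X ∈ Cls Q} := by
        ext X
        refine and_congr_right fun hX => forall_congr' fun n => ?_
        unfold evalO
        rw [(hu _ n).1, UG_off c Q hX]
      rw [e]
      apply muR_interval
      · exact ((meas_seg _ fun l => l = List.replicate c false).compl).inter (meas_cls Q)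
      · positivity
      · exact hγ1
      · exact hγ2
      · intro x h0 h1 h2 h3
        exact ⟨fun hc => absurd ((extends_zero h0 h1 c).1 hc) (not_lt.2 h2), (hr x h0 h1).1 h3⟩
      · rintro x h0 h1 ⟨h2, h3⟩
        exact ⟨not_lt.1 fun hc => h2 ((extends_zero h0 h1 c).2 hc), (hr x h0 h1).2 h3⟩

end RandProb


namespace RandProb

theorem conv_step {a b : List Bool → ℚ} {d : ℕ → ℚ} (ha : Computable a) (hb : Computable b) (hd : Computable d) :
    Computable fun z : ℕ × List Bool × ℚ × ℚ =>
      bif decide (a z.2.1 ≤ z.2.2.1) then (a z.2.1 - d z.1 * (z.2.2.2 - b z.2.1), b z.2.1) else z.2.2 := by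
  have e1 : Computable fun z : ℕ × List Bool × ℚ × ℚ => a z.2.1 := by fun_prop
  have e2 : Computable fun z : ℕ × List Bool × ℚ × ℚ => b z.2.1 := by fun_prop
  have e3 : Computable fun z : ℕ × List Bool × ℚ × ℚ => d z.1 := by fun_prop
  have e4 : Computable fun z : ℕ × List Bool × ℚ × ℚ => z.2.2 := by fun_prop
  exact cp_cond (cp_rat_le e1 (cp_fst e4)) (cp_mk (cp_rat_sub e1 (cp_rat_mul e3 (cp_rat_sub (cp_snd e4) e2))) e2) e4

theorem conv_lo {a b : List Bool → ℚ} {d : ℕ → ℚ} {st : ℕ → List Bool → ℚ × ℚ} (ha : Computable a)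
    (hb : Computable b) (hd : Computable d) (hst : Computable fun z : ℕ × List Bool => st z.1 z.2) :
    Computable fun z : ℕ × List Bool => a z.2 - 2 * d z.1 * ((st z.1 z.2).2 - b z.2) := by
  have e1 : Computable fun z : ℕ × List Bool => a z.2 := by fun_prop
  have e2 : Computable fun z : ℕ × List Bool => b z.2 := by fun_prop
  have e3 : Computable fun z : ℕ × List Bool => d z.1 := by fun_prop
  exact cp_rat_sub e1 (cp_rat_mul (cp_rat_mul (Computable.const _) e3) (cp_rat_sub (cp_snd hst) e2))

theorem conv_aux {a b c d e : List Bool × ℕ → ℚ} (ha : Computable a) (hb : Computable b) (hc : Computable c)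
    (hd : Computable d) (he : Computable e) :
    Computable fun z => decide (a z ≤ b z) && (decide (c z = d z) && decide (e z = a z)) :=
  cp_and (cp_rat_le ha hb) (cp_and (cp_eq hc hd) (cp_eq he ha))

theorem conv_g : Computable fun z : List Bool × ℕ => (z.2.unpair.1, z.1) :=
  cp_mk (cp_fst (cp_unpair Computable.snd)) Computable.fst

theorem conv_comp {β} [Primcodable β] {f : ℕ × List Bool → β} (h : Computable f) :
    Computable fun z : List Bool × ℕ => f (z.2.unpair.1, z.1) := h.comp conv_g

theorem conv_zero {β} [Primcodable β] {f : ℕ × List Bool → β} (h : Computable f) :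
    Computable fun τ : List Bool => f (0, τ) := h.comp (cp_mk (Computable.const 0) Computable.id)

theorem conv_PW {a : List Bool → ℚ} {lo : ℕ → List Bool → ℚ} {st : ℕ → List Bool → ℚ × ℚ} (ha : Computable a)
    (hlo : Computable fun z : ℕ × List Bool => lo z.1 z.2) (hst : Computable fun z : ℕ × List Bool => st z.1 z.2) :
    Computable fun z : List Bool × ℕ =>
    decide (a z.1 ≤ (st z.2.unpair.1 z.1).1) && (decide (dq z.2.unpair.2.unpair.1 = lo z.2.unpair.1 z.1) &&
      decide (dq z.2.unpair.2.unpair.2 = a z.1)) := by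
  have e1 : Computable fun z : List Bool × ℕ => (st z.2.unpair.1 z.1).1 := cp_fst (conv_comp hst)
  have e2 : Computable fun z : List Bool × ℕ => lo z.2.unpair.1 z.1 := conv_comp hlo
  have e3 : Computable fun z : List Bool × ℕ => a z.1 := by fun_prop
  have e4 : Computable fun z : List Bool × ℕ => dq z.2.unpair.2.unpair.1 := by fun_prop
  have e5 : Computable fun z : List Bool × ℕ => dq z.2.unpair.2.unpair.2 := by fun_prop
  exact conv_aux e3 e1 e4 e2 e5

theorem conv_y {d : ℕ → ℚ} {st : ℕ → List Bool → ℚ × ℚ}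
    (hd : Computable d) (hst : Computable fun z : ℕ × List Bool => st z.1 z.2) :
    Computable fun z : ℕ × List Bool => (st z.1 z.2).1 - d z.1 * (st z.1 z.2).2 + d z.1 := by
  have e3 : Computable fun z : ℕ × List Bool => d z.1 := by fun_prop
  exact cp_rat_add (cp_rat_sub (cp_fst hst) (cp_rat_mul e3 (cp_snd hst))) e3

theorem conv_ca {α : ℝ} (hce : RightCeIn (iterJump 1) α) : CeX fun z : ℕ × ℚ => (fun _ : ℕ => α) z.1 < z.2 :=
  (rightCe_iff.1 hce).precomp (f := fun z : ℕ × ℚ => z.2) Computable.snd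

theorem conv_UD : Computable fun z : ℕ × List Bool × ℕ => (UD z.2.1 z.2.2).isSome :=
  cp_isSome (UD_comp.comp Computable.snd)

theorem conv_cb : CeX fun z : ℕ × ℚ => (fun _ : ℕ => β0) z.1 < z.2 :=
  (cls_sig2 (Q := fun (_ : ℕ) τ n => (UD τ n).isSome) conv_UD).ceX

theorem conv_n {β γ} [Primcodable β] [Primcodable γ] {f : ℕ × γ → β} (h : Computable f) (n : ℕ) :
    Computable fun z : γ => f (n, z) := h.comp (cp_mk (Computable.const n) Computable.id)

theorem conv_real {B : ℕ → List Bool → ℚ} (hB : Computable fun z : ℕ × List Bool => B z.1 z.2) :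
    ∃ Q : ℕ → List Bool → ℕ → Bool, (Computable fun z : ℕ × List Bool × ℕ => Q z.1 z.2.1 z.2.2) ∧
      ∀ m (β : ℝ), (∀ q : ℚ, (∃ k, B m (initSeg X' k) < q) ↔ β < q) → ∀ x : ℝ, 0 ≤ x → x < 1 →
        (x < β → digits x ∈ Cls (Q m)) ∧ (digits x ∈ Cls (Q m) → x ≤ β) :=
  realize (ceX_seq hB).sig2

set_option maxHeartbeats 1000000 in
theorem converse (α : ℝ) (h0 : 0 < α) (h1 : α < 1) (hR : MLRandomIn (iterJump 1) α)
    (hce : RightCeIn (iterJump 1) α) : ∃ u : CodeO, UniversalOM u ∧ muR (TOT u) = α := by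
  obtain ⟨n0, hn0⟩ := exists_pow_lt_of_lt_one (show 0 < min α (1 - α) from lt_min h0 (by linarith))
    (show (1 / 2 : ℝ) < 1 by norm_num)
  have hn1 : (1 / 2 : ℝ) ^ n0 < α := hn0.trans_le (min_le_left _ _)
  have hn2 : (1 / 2 : ℝ) ^ n0 < 1 - α := hn0.trans_le (min_le_right _ _)
  have hβ0 : 0 ≤ β0 := muR_nonneg _
  have hβ1 : β0 ≤ 1 := muR_le_one _
  have cα : CeX fun z : ℕ × ℚ => (fun _ : ℕ => α) z.1 < z.2 :=
    conv_ca hce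
  have cβ : CeX fun z : ℕ × ℚ => (fun _ : ℕ => β0) z.1 < z.2 :=
    conv_cb
  obtain ⟨A, hA, hAp⟩ := exists_appr (γ := fun _ : ℕ => α) cα (fun _ => by show α < 2; linarith)
  obtain ⟨B, hB, hBp⟩ := exists_appr (γ := fun _ : ℕ => β0) cβ (fun _ => by show β0 < 2; linarith)
  obtain ⟨hA1, hA2, hA3, -, hA4⟩ := hAp 0
  obtain ⟨hB1, hB2, hB3, -, hB4⟩ := hBp 0
  let a : List Bool → ℚ := fun τ => A 0 τ
  let b : List Bool → ℚ := fun τ => B 0 τ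
  have ha : Computable a := conv_zero hA
  have hb : Computable b := conv_zero hB
  let d : ℕ → ℚ := fun n => (1 / 2) ^ (n + 2 + n0)
  have hd : Computable d := by
    have e : Computable fun n : ℕ => n + 2 + n0 := by fun_prop
    exact cp_rat_pow (Computable.const _) e
  let step : ℕ → List Bool → ℚ × ℚ → ℚ × ℚ := fun n τ st =>
    bif decide (a τ ≤ st.1) then (a τ - d n * (st.2 - b τ), b τ) else st
  have hstep : Computable fun z : ℕ × List Bool × ℚ × ℚ => step z.1 z.2.1 z.2.2 :=
    conv_step ha hb hd
  let st : ℕ → List Bool → ℚ × ℚ := run (fun _ => (2, 2)) step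
  have hst : Computable fun z : ℕ × List Bool => st z.1 z.2 := cp_run (Computable.const _) hstep
  -- the Kučera–Slaman sequences
  have hKS : ∀ n, KS α β0 (d n) (fun s => a (initSeg X' s)) (fun s => b (initSeg X' s))
      (fun s => (st n (initSeg X' s)).1) (fun s => (st n (initSeg X' s)).2) := by
    intro n
    have hnext : ∀ s, st n (initSeg X' (s + 1)) = step n (initSeg X' s) (st n (initSeg X' s)) := fun s => run_succ _ _ _ _ _
    refine ⟨?_, hβ0, ?_, ?_, hA2, hB2, ?_, hA4, hB4, by linarith, ?_, ?_, ?_, ?_⟩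
    · have : (0 : ℚ) < d n := by unfold d; positivity
      exact_mod_cast this
    · intro i j hij
      have : a (initSeg X' j) ≤ a (initSeg X' i) := hA1 hij
      show (a (initSeg X' j) : ℝ) ≤ (a (initSeg X' i) : ℝ)
      exact_mod_cast this
    · intro i j hij
      have : b (initSeg X' j) ≤ b (initSeg X' i) := hB1 hij
      show (b (initSeg X' j) : ℝ) ≤ (b (initSeg X' i) : ℝ)
      exact_mod_cast this
    · intro s
      have : b (initSeg X' s) ≤ 2 := hB3 s
      exact_mod_cast this
    · simp [st, run_zero]
    · simp [st, run_zero]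
    · intro s hs
      have hs' : a (initSeg X' s) ≤ (st n (initSeg X' s)).1 := by exact_mod_cast hs
      simp only [hnext]
      unfold step
      rw [decide_eq_true hs', cond_true]
      push_cast
      exact ⟨rfl, rfl⟩
    · intro s hs
      have hs' : ¬ a (initSeg X' s) ≤ (st n (initSeg X' s)).1 := by
        intro hc; apply hs; exact_mod_cast hc
      simp only [hnext]
      unfold step
      rw [decide_eq_false hs', cond_false]
      exact ⟨rfl, rfl⟩
  -- the test
  let lo : ℕ → List Bool → ℚ := fun n τ => a τ - 2 * d n * ((st n τ).2 - b τ)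
  have hlo : Computable fun z : ℕ × List Bool => lo z.1 z.2 := conv_lo ha hb hd hst
  let PW : List Bool → ℕ → Bool := fun τ k =>
    decide (a τ ≤ (st k.unpair.1 τ).1) && (decide (dq k.unpair.2.unpair.1 = lo k.unpair.1 τ) &&
      decide (dq k.unpair.2.unpair.2 = a τ))
  have hPW : Computable fun z : List Bool × ℕ => PW z.1 z.2 := conv_PW ha hlo hst
  have hW : CeIn (iterJump 1) {k | ∃ s, PW (initSeg X' s) k = true} := ceIn_of_ceX ⟨PW, hPW, fun _ => Iff.rfl⟩
  have htest : ∀ n, testSet {k | ∃ s, PW (initSeg X' s) k = true} n =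
      ⋃ s, {r : ℝ | (a (initSeg X' s) : ℝ) ≤ (st n (initSeg X' s)).1 ∧
        (a (initSeg X' s) : ℝ) - 2 * (d n : ℝ) * ((st n (initSeg X' s)).2 - b (initSeg X' s)) < r ∧ r < a (initSeg X' s)} := by
    intro n
    have hPWi : ∀ s (p q : ℚ), PW (initSeg X' s) (Nat.pair n (Encodable.encode (p, q))) = true ↔
        a (initSeg X' s) ≤ (st n (initSeg X' s)).1 ∧ p = lo n (initSeg X' s) ∧ q = a (initSeg X' s) := by
      intro s p q
      simp only [PW, Encodable.encode_prod_val, Nat.unpair_pair, dq_encode, Bool.and_eq_true, decide_eq_true_eq]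
    have hloc : ∀ s, (a (initSeg X' s) : ℝ) - 2 * (d n : ℝ) * ((st n (initSeg X' s)).2 - b (initSeg X' s)) =
        (lo n (initSeg X' s) : ℝ) := by
      intro s; unfold lo; push_cast; ring
    ext r
    rw [Set.mem_iUnion]
    constructor
    · rintro ⟨p, q, ⟨s, hs⟩, hp, hq⟩
      obtain ⟨e1, e2, e3⟩ := (hPWi s p q).1 hs
      refine ⟨s, by exact_mod_cast e1, ?_, ?_⟩
      · rw [hloc, ← e2]; exact hp
      · rw [← e3]; exact hq
    · rintro ⟨s, hs1, hs2, hs3⟩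
      rw [hloc] at hs2
      exact ⟨lo n (initSeg X' s), a (initSeg X' s), ⟨s, (hPWi s _ _).2 ⟨by exact_mod_cast hs1, rfl, rfl⟩⟩, hs2, hs3⟩
  have hdr : ∀ n, (d n : ℝ) = (1 / 2) ^ (n + 2 + n0) := by
    intro n; simp [d]
  obtain ⟨n, hn⟩ := hR _ hW (by
    intro n
    rw [htest]
    refine (hKS n).vol.trans (ENNReal.ofReal_le_ofReal ?_)
    rw [hdr, pow_add, pow_add]
    have e1 : (1 / 2 : ℝ) ^ n0 ≤ 1 := pow_le_one₀ (by norm_num) (by norm_num)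
    have e2 : (0 : ℝ) < (1 / 2) ^ n := by positivity
    have e3 : (2⁻¹ : ℝ) ^ n = (1 / 2) ^ n := by norm_num
    rw [e3]
    nlinarith)
  rw [htest] at hn
  have hcut := (hKS n).cut hn
  let y : ℕ → List Bool → ℚ := fun n τ => (st n τ).1 - d n * (st n τ).2 + d n
  have hyc : Computable fun z : ℕ × List Bool => y z.1 z.2 := conv_y hd hst
  obtain ⟨Q, hQ, hQp⟩ := conv_real hyc
  have hδ0 : (0 : ℝ) < (1 / 2) ^ (n + 2 + n0) := by positivity
  have hδ1 : (1 / 2 : ℝ) ^ (n + 2 + n0) ≤ (1 / 2) ^ n0 :=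
    pow_le_pow_of_le_one (by norm_num) (by norm_num) (by omega)
  have hcut2 : ∀ q : ℚ, (∃ k, y n (initSeg X' k) < q) ↔
      α - (1 / 2) ^ (n + 2 + n0) * β0 + (1 / 2) ^ (n + 2 + n0) < q := by
    intro q
    have := hcut ((q : ℝ) - (1 / 2) ^ (n + 2 + n0))
    rw [hdr] at this
    rw [← lt_sub_iff_add_lt, ← this]
    refine exists_congr fun k => ?_
    rw [lt_sub_iff_add_lt, ← hdr]
    unfold y
    exact_mod_cast Iff.rfl
  have hr := hQp n _ hcut2
  have hQn : Computable fun z : List Bool × ℕ => Q n z.1 z.2 :=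
    conv_n hQ n
  have e1 : (1 / 2 : ℝ) ^ (n + 2 + n0) * β0 ≤ (1 / 2) ^ (n + 2 + n0) := by nlinarith
  have e2 : 0 ≤ (1 / 2 : ℝ) ^ (n + 2 + n0) * β0 := by positivity
  obtain ⟨u, hu, hmu⟩ := build (c := n + 2 + n0) hQn (by linarith) (by linarith) hr
  exact ⟨u, hu, by rw [hmu]; ring⟩

end RandProb

namespace RandProb

/-- **Totality probability for universal oracle machines.**
The probability that the function computed by a universal oracle machine is total is a
2-random `∅'`-right-c.e. real; conversely, every 2-random `∅'`-right-c.e. real in `(0,1)`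
is the totality probability of some universal oracle machine. -/
theorem totality_probability_characterization :
    (∀ u : CodeO, UniversalOM u →
        NRandom 2 (muR (TOT u)) ∧ RightCeIn (iterJump 1) (muR (TOT u))) ∧
    (∀ α : ℝ, 0 < α → α < 1 → NRandom 2 α → RightCeIn (iterJump 1) α →
        ∃ u : CodeO, UniversalOM u ∧ muR (TOT u) = α) := by
  exact ⟨fun u hu => ⟨random u hu, right_ce u⟩, fun α h0 h1 hR hce => converse α h0 h1 hR hce⟩

end RandProb
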